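/- Let X be a K-convex complex Banach space and p ∈ (1,∞). Then there exist α ∈ [1,2) and C ∈ (0,∞) such that for every n,d ∈ ℕ with 1 ≤ d ≤ n, every function f : {-1,1}^n → X of degree at most d satisfies (2^{-n} Σ_{δ ∈ {-1,1}^n} ‖Σ_{i=1}^n δ_i ∂_i f‖_{L_p({-1,1}^n;X)}^p)^{1/p} ≤ C d^α (log d + 1) ‖f‖_{L_p({-1,1}^n;X)}. -/

import Mathlib

open scoped BigOperators ENNReal NNReal

noncomputable section

namespace HammingCube

variable {X : Type*} [NormedAddCommGroup X] [NormedSpace ℂ X]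

/-- The sign ±1 associated to a boolean coordinate. -/
def sgn (b : Bool) : ℝ := if b then 1 else -1

/-- The Walsh function `w_A(ε) = ∏_{i ∈ A} ε_i`. -/
def walsh {n : ℕ} (A : Finset (Fin n)) (ε : Fin n → Bool) : ℝ := ∏ i ∈ A, sgn (ε i)

/-- The Fourier–Walsh coefficient `f̂(A) = 2⁻ⁿ ∑_δ f(δ) w_A(δ)`. -/
def coeff {n : ℕ} (f : (Fin n → Bool) → X) (A : Finset (Fin n)) : X :=
  (2 ^ n : ℝ)⁻¹ • ∑ δ : Fin n → Bool, walsh A δ • f δ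

/-- `f` has degree at most `d`: `f̂(A) = 0` whenever `|A| > d`. -/
def degLE {n : ℕ} (f : (Fin n → Bool) → X) (d : ℕ) : Prop :=
  ∀ A : Finset (Fin n), d < A.card → coeff f A = 0

/-- `f` belongs to the `d`-th tail space: `f̂(A) = 0` whenever `|A| < d`. -/
def tailSpace {n : ℕ} (f : (Fin n → Bool) → X) (d : ℕ) : Prop :=
  ∀ A : Finset (Fin n), A.card < d → coeff f A = 0

/-- The heat semigroup `e^{-tΔ} f = ∑_A e^{-t|A|} f̂(A) w_A`. -/
def heat {n : ℕ} (t : ℝ) (f : (Fin n → Bool) → X) : (Fin n → Bool) → X :=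
  fun ε => ∑ A : Finset (Fin n), Real.exp (-t * A.card) • walsh A ε • coeff f A

/-- The hypercube Laplacian `Δ f = ∑_A |A| f̂(A) w_A`. -/
def lap {n : ℕ} (f : (Fin n → Bool) → X) : (Fin n → Bool) → X :=
  fun ε => ∑ A : Finset (Fin n), (A.card : ℝ) • walsh A ε • coeff f A

/-- The fractional Laplacian `Δ^γ f = ∑_A |A|^γ f̂(A) w_A`. -/
def fracLap {n : ℕ} (γ : ℝ) (f : (Fin n → Bool) → X) : (Fin n → Bool) → X :=
  fun ε => ∑ A : Finset (Fin n), ((A.card : ℝ) ^ γ) • walsh A ε • coeff f A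

/-- The `i`-th discrete partial derivative. -/
def pderiv {n : ℕ} (i : Fin n) (f : (Fin n → Bool) → X) : (Fin n → Bool) → X :=
  fun ε => (2 : ℝ)⁻¹ • (f ε - f (Function.update ε i (!(ε i))))

/-- The vector-valued `L_p` norm `(2⁻ⁿ ∑_ε ‖f(ε)‖^p)^{1/p}` for finite `p`. -/
def lpNorm {n : ℕ} {Y : Type*} [NormedAddCommGroup Y] (p : ℝ)
    (f : (Fin n → Bool) → Y) : ℝ :=
  ((2 ^ n : ℝ)⁻¹ * ∑ ε : Fin n → Bool, ‖f ε‖ ^ p) ^ (1 / p)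

/-- The `L_∞` norm `max_ε ‖f(ε)‖`. -/
def linfNorm {n : ℕ} {Y : Type*} [NormedAddCommGroup Y]
    (f : (Fin n → Bool) → Y) : ℝ :=
  ⨆ ε : Fin n → Bool, ‖f ε‖

/-- The `L_p` norm for `p ∈ [1,∞]` encoded as `p : ℝ≥0∞`. -/
def lpNormE {n : ℕ} {Y : Type*} [NormedAddCommGroup Y] (p : ℝ≥0∞)
    (f : (Fin n → Bool) → Y) : ℝ :=
  if p = ⊤ then linfNorm f else lpNorm p.toReal f

/-- The scalar `L_p` norm of the gradient `‖(∑_i |∂_i f|²)^{1/2}‖_{L_p}`. -/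
def gradLpNorm {n : ℕ} (p : ℝ) (f : (Fin n → Bool) → ℂ) : ℝ :=
  lpNorm p (fun ε => Real.sqrt (∑ i : Fin n, ‖pderiv i f ε‖ ^ 2))

/-- The Rademacher projection `Rad f(ε) = ∑_i f̂({i}) ε_i`. -/
def Rad {n : ℕ} (f : (Fin n → Bool) → X) : (Fin n → Bool) → X :=
  fun ε => ∑ i : Fin n, sgn (ε i) • coeff f {i}

/-- A complex Banach space is `K`-convex if the Rademacher projections are uniformly
bounded on `L_q` for some `q ∈ (1,∞)`. -/
def KConvex (X : Type*) [NormedAddCommGroup X] [NormedSpace ℂ X] : Prop :=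
  ∃ q : ℝ, 1 < q ∧ ∃ M : ℝ, ∀ (n : ℕ) (f : (Fin n → Bool) → X),
    lpNorm q (Rad f) ≤ M * lpNorm q f

/-- `X` has cotype `q` with constant `C`. -/
def HasCotype (X : Type*) [NormedAddCommGroup X] [NormedSpace ℂ X] (q C : ℝ) : Prop :=
  ∀ (n : ℕ) (x : Fin n → X),
    C⁻¹ * (∑ i : Fin n, ‖x i‖ ^ q) ^ (1 / q) ≤
      ((2 ^ n : ℝ)⁻¹ * ∑ ε : Fin n → Bool, ‖∑ i : Fin n, sgn (ε i) • x i‖ ^ q) ^ (1 / q)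

/-- The entropy `Ent(h)` of a nonnegative function on the cube. -/
def entropy {n : ℕ} (h : (Fin n → Bool) → ℝ) : ℝ :=
  (2 ^ n : ℝ)⁻¹ * ∑ ε : Fin n → Bool, h ε * Real.log (h ε) -
    ((2 ^ n : ℝ)⁻¹ * ∑ ε : Fin n → Bool, h ε) *
      Real.log ((2 ^ n : ℝ)⁻¹ * ∑ ε : Fin n → Bool, h ε)

/-- The `L_∞` norm of the gradient `max_ε (∑_i |∂_i f(ε)|²)^{1/2}`. -/
def gradLinfNorm {n : ℕ} (f : (Fin n → Bool) → ℂ) : ℝ :=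
  ⨆ ε : Fin n → Bool, Real.sqrt (∑ i : Fin n, ‖pderiv i f ε‖ ^ 2)


set_option linter.unusedSectionVars false
universe u
/-! ### Walsh expansion -/

lemma sgn_mul_self (b : Bool) : sgn b * sgn b = 1 := by cases b <;> simp [sgn]

lemma sum_prod_bool {n : ℕ} (g : Fin n → Bool → ℝ) :
    ∑ ε : Fin n → Bool, ∏ i, g i (ε i) = ∏ i, (g i true + g i false) := by
  have h := Finset.prod_univ_sum (fun _ : Fin n => (Finset.univ : Finset Bool)) g
  rw [Fintype.piFinset_univ] at h
  rw [← h]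
  exact Finset.prod_congr rfl fun i _ => by simp

lemma walsh_eq_prod {n : ℕ} (A : Finset (Fin n)) (ε : Fin n → Bool) :
    walsh A ε = ∏ i, if i ∈ A then sgn (ε i) else 1 := by
  simp [walsh, Finset.prod_ite_mem]

lemma sum_walsh_mul {n : ℕ} (A B : Finset (Fin n)) :
    ∑ ε : Fin n → Bool, walsh A ε * walsh B ε = if A = B then (2 : ℝ) ^ n else 0 := by
  simp_rw [walsh_eq_prod, ← Finset.prod_mul_distrib]
  rw [sum_prod_bool (fun i b => (if i ∈ A then sgn b else 1) * (if i ∈ B then sgn b else 1))]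
  split_ifs with h
  · subst h
    rw [Finset.prod_congr rfl (g := fun _ => (2 : ℝ))]
    · simp
    · intro i _
      split_ifs <;> simp [sgn] <;> norm_num
  · have : ∃ i, ¬ (i ∈ A ↔ i ∈ B) := by
      by_contra hc
      push Not at hc
      exact h (Finset.ext hc)
    obtain ⟨i, hi⟩ := this
    apply Finset.prod_eq_zero (Finset.mem_univ i)
    by_cases h1 : i ∈ A <;> by_cases h2 : i ∈ B <;> simp [h1, h2, sgn] at hi ⊢

lemma sum_walsh_walsh {n : ℕ} (ε δ : Fin n → Bool) :
    ∑ A : Finset (Fin n), walsh A ε * walsh A δ = if ε = δ then (2 : ℝ) ^ n else 0 := by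
  have h := Fintype.prod_add (fun i => sgn (ε i) * sgn (δ i)) (fun _ : Fin n => (1 : ℝ))
  have h2 : ∑ A : Finset (Fin n), walsh A ε * walsh A δ
      = ∏ i, (sgn (ε i) * sgn (δ i) + 1) := by
    rw [h]
    refine Finset.sum_congr rfl fun A _ => ?_
    simp [walsh, Finset.prod_mul_distrib]
  rw [h2]
  split_ifs with h
  · subst h
    simp only [sgn_mul_self]
    norm_num
  · obtain ⟨i, hi⟩ := Function.ne_iff.mp h
    apply Finset.prod_eq_zero (Finset.mem_univ i)
    cases h1 : ε i <;> cases h2 : δ i <;> simp [h1, h2, sgn] at hi ⊢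

lemma walsh_inversion {n : ℕ} (f : (Fin n → Bool) → X) (ε : Fin n → Bool) :
    ∑ A : Finset (Fin n), walsh A ε • coeff f A = f ε := by
  have : ∀ A : Finset (Fin n), walsh A ε • coeff f A
      = ∑ δ : Fin n → Bool, ((2 ^ n : ℝ)⁻¹ * (walsh A ε * walsh A δ)) • f δ := by
    intro A
    simp only [coeff, Finset.smul_sum, smul_smul]
    refine Finset.sum_congr rfl fun δ _ => ?_
    congr 1; ring
  simp_rw [this]
  rw [Finset.sum_comm]
  simp_rw [← Finset.sum_smul, ← Finset.mul_sum, sum_walsh_walsh]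
  simp

/-- Fourier multiplier. -/
def mul {n : ℕ} (m : Finset (Fin n) → ℂ) (f : (Fin n → Bool) → X) : (Fin n → Bool) → X :=
  fun ε => ∑ A : Finset (Fin n), (m A * (walsh A ε : ℂ)) • coeff f A

lemma coeff_sum_walsh {n : ℕ} (x : Finset (Fin n) → X) (B : Finset (Fin n)) :
    coeff (fun ε => ∑ A : Finset (Fin n), (walsh A ε : ℂ) • x A) B = x B := by
  simp only [coeff, Finset.smul_sum]
  rw [Finset.sum_comm]
  have : ∀ A : Finset (Fin n), ∑ δ : Fin n → Bool,
      (2 ^ n : ℝ)⁻¹ • walsh B δ • (walsh A δ : ℂ) • x A = if B = A then x A else 0 := by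
    intro A
    simp only [Complex.coe_smul, smul_smul]
    rw [← Finset.sum_smul]
    rw [← Finset.mul_sum, sum_walsh_mul]
    split_ifs <;> simp
  simp_rw [this]
  simp

lemma coeff_mul {n : ℕ} (m : Finset (Fin n) → ℂ) (f : (Fin n → Bool) → X)
    (B : Finset (Fin n)) : coeff (mul m f) B = m B • coeff f B := by
  rw [← coeff_sum_walsh (fun A => m A • coeff f A) B]
  congr 1
  funext ε
  simp only [mul, smul_smul]
  exact Finset.sum_congr rfl fun A _ => by rw [mul_comm]

lemma mul_mul {n : ℕ} (m m' : Finset (Fin n) → ℂ) (f : (Fin n → Bool) → X) :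
    mul m (mul m' f) = mul (fun A => m A * m' A) f := by
  funext ε
  simp only [mul, coeff_mul, smul_smul]
  refine Finset.sum_congr rfl fun A _ => ?_
  congr 1; ring

lemma mul_one_eq {n : ℕ} (f : (Fin n → Bool) → X) : mul (fun _ => 1) f = f := by
  funext ε
  simp only [mul, one_mul, Complex.coe_smul]
  exact walsh_inversion f ε

/-- mixing of two points of the cube -/
def mix {n : ℕ} (B : Finset (Fin n)) (δ ε : Fin n → Bool) : Fin n → Bool :=
  fun i => if i ∈ B then δ i else ε i

lemma walsh_mix {n : ℕ} (A B : Finset (Fin n)) (δ ε : Fin n → Bool) :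
    walsh A (mix B δ ε) = walsh (A ∩ B) δ * walsh (A \ B) ε := by
  simp only [walsh_eq_prod, ← Finset.prod_mul_distrib]
  refine Finset.prod_congr rfl fun i _ => ?_
  by_cases h1 : i ∈ A <;> by_cases h2 : i ∈ B <;> simp [h1, h2, mix]

lemma mul_restrict {n : ℕ} (m : Finset (Fin n) → ℂ) (B : Finset (Fin n))
    (f : (Fin n → Bool) → X) (δ ε : Fin n → Bool) :
    mul (fun A => m (A ∩ B)) f (mix B δ ε) = mul m (fun δ' => f (mix B δ' ε)) δ := by
  have key : ∀ C : Finset (Fin n), coeff (fun δ' => f (mix B δ' ε)) C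
      = ∑ A ∈ (Finset.univ : Finset (Finset (Fin n))).filter (fun A => A ∩ B = C),
          walsh (A \ B) ε • coeff f A := by
    intro C
    rw [← coeff_sum_walsh (fun C => ∑ A ∈ (Finset.univ : Finset (Finset (Fin n))).filter
      (fun A => A ∩ B = C), walsh (A \ B) ε • coeff f A) C]
    congr 1
    funext δ'
    rw [← walsh_inversion f (mix B δ' ε)]
    simp only [Complex.coe_smul]
    rw [← Finset.sum_fiberwise (s := Finset.univ) (g := fun A : Finset (Fin n) => A ∩ B)]
    refine Finset.sum_congr rfl fun C _ => ?_
    rw [Finset.smul_sum]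
    refine Finset.sum_congr rfl fun A hA => ?_
    rw [walsh_mix, (Finset.mem_filter.mp hA).2, smul_smul]
  simp only [mul, key]
  rw [← Finset.sum_fiberwise (s := Finset.univ) (g := fun A : Finset (Fin n) => A ∩ B)]
  refine Finset.sum_congr rfl fun C _ => ?_
  rw [Finset.smul_sum]
  refine Finset.sum_congr rfl fun A hA => ?_
  rw [walsh_mix, (Finset.mem_filter.mp hA).2, ← Complex.coe_smul, smul_smul]
  push_cast
  congr 1; ring

lemma mix_mix_left {n : ℕ} (B : Finset (Fin n)) (δ ε : Fin n → Bool) :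
    mix B (mix B δ ε) (mix B ε δ) = δ := by
  funext i
  by_cases h : i ∈ B <;> simp [mix, h]

lemma sum_mix {n : ℕ} (B : Finset (Fin n)) (Φ : (Fin n → Bool) → ℝ) :
    ∑ ε : Fin n → Bool, ∑ δ : Fin n → Bool, Φ (mix B δ ε) = 2 ^ n * ∑ ε, Φ ε := by
  rw [← Fintype.sum_prod_type' (f := fun ε δ => Φ (mix B δ ε))]
  let e : Equiv.Perm ((Fin n → Bool) × (Fin n → Bool)) :=
    Function.Involutive.toPerm (fun x => (mix B x.1 x.2, mix B x.2 x.1)) (by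
      rintro ⟨a, b⟩
      simp [mix_mix_left])
  rw [← Equiv.sum_comp e]
  have : ∀ x, Φ (mix B (e x).2 (e x).1) = Φ x.2 := by
    rintro ⟨a, b⟩
    show Φ (mix B (mix B b a) (mix B a b)) = Φ b
    rw [mix_mix_left]
  simp_rw [this]
  rw [Fintype.sum_prod_type' (f := fun _ ε => Φ ε)]
  simp

/-! ### Norms -/

/-- unnormalised `ℓ_p` norm -/
def N {ι : Type*} [Fintype ι] (p : ℝ) (f : ι → X) : ℝ := (∑ i, ‖f i‖ ^ p) ^ (1 / p)

section norms
variable {ι : Type*} [Fintype ι] {p : ℝ}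

lemma N_eq (hp : 1 ≤ p) (f : ι → X) :
    N p f = ‖(WithLp.toLp (ENNReal.ofReal p) f : PiLp (ENNReal.ofReal p) fun _ : ι => X)‖ := by
  have : (ENNReal.ofReal p).toReal = p := ENNReal.toReal_ofReal (by linarith)
  rw [PiLp.norm_eq_sum (by rw [this]; linarith), this]
  rfl

lemma fact_p (hp : 1 ≤ p) : Fact (1 ≤ ENNReal.ofReal p) :=
  ⟨by rw [← ENNReal.ofReal_one]; exact ENNReal.ofReal_le_ofReal hp⟩

lemma N_nonneg (f : ι → X) : 0 ≤ N p f := by unfold N; positivity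

lemma N_smul (hp : 1 ≤ p) (c : ℂ) (f : ι → X) : N p (fun i => c • f i) = ‖c‖ * N p f := by
  have := fact_p hp
  rw [N_eq hp, N_eq hp, ← norm_smul]
  rfl

lemma N_add_le (hp : 1 ≤ p) (f g : ι → X) : N p (fun i => f i + g i) ≤ N p f + N p g := by
  have := fact_p hp
  rw [N_eq hp, N_eq hp, N_eq hp]
  exact norm_add_le _ _

lemma N_sum_le (hp : 1 ≤ p) {κ : Type*} (s : Finset κ) (f : κ → ι → X) :
    N p (fun i => ∑ k ∈ s, f k i) ≤ ∑ k ∈ s, N p (f k) := by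
  have := fact_p hp
  simp_rw [N_eq hp]
  refine le_trans (le_of_eq ?_) (norm_sum_le _ _)
  congr 1
  ext i
  simp

lemma N_pow (hp : 1 ≤ p) (f : ι → X) : N p f ^ p = ∑ i, ‖f i‖ ^ p := by
  unfold N
  rw [one_div, Real.rpow_inv_rpow (by positivity) (by linarith)]

lemma N_le_iff {κ : Type*} [Fintype κ] (hp : 1 ≤ p) {K : ℝ} (hK : 0 ≤ K) (f : ι → X) (g : κ → X) :
    N p f ≤ K * N p g ↔ ∑ i, ‖f i‖ ^ p ≤ K ^ p * ∑ i, ‖g i‖ ^ p := by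
  rw [← N_pow hp, ← N_pow hp, ← Real.mul_rpow hK (N_nonneg _)]
  exact (Real.rpow_le_rpow_iff (N_nonneg _) (mul_nonneg hK (N_nonneg _)) (by linarith)).symm

end norms

/-- Bounded multipliers -/
def Bdd {n : ℕ} (X : Type*) [NormedAddCommGroup X] [NormedSpace ℂ X] (p : ℝ)
    (m : Finset (Fin n) → ℂ) (K : ℝ) : Prop :=
  ∀ f : (Fin n → Bool) → X, N p (mul m f) ≤ K * N p f

lemma Bdd.mono {n : ℕ} {p : ℝ} {m : Finset (Fin n) → ℂ} {K K' : ℝ} (h : Bdd X p m K)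
    (hK : K ≤ K') : Bdd X p m K' :=
  fun f => (h f).trans (mul_le_mul_of_nonneg_right hK (N_nonneg _))

lemma Bdd.mul {n : ℕ} {p : ℝ} {m m' : Finset (Fin n) → ℂ} {K K' : ℝ} (hK : 0 ≤ K)
    (h : Bdd X p m K) (h' : Bdd X p m' K') : Bdd X p (fun A => m A * m' A) (K * K') := by
  intro f
  rw [← mul_mul, mul_assoc]
  exact (h _).trans (mul_le_mul_of_nonneg_left (h' _) hK)

lemma Bdd.one {n : ℕ} {p : ℝ} : Bdd X p (fun _ : Finset (Fin n) => 1) 1 := by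
  intro f
  rw [mul_one_eq, one_mul]

lemma mul_sum_mult {n : ℕ} {κ : Type*} (s : Finset κ) (c : κ → ℂ) (m : κ → Finset (Fin n) → ℂ)
    (f : (Fin n → Bool) → X) :
    mul (fun A => ∑ k ∈ s, c k * m k A) f = fun ε => ∑ k ∈ s, c k • mul (m k) f ε := by
  funext ε
  simp only [HammingCube.mul, Finset.smul_sum]
  rw [Finset.sum_comm]
  refine Finset.sum_congr rfl fun A _ => ?_
  rw [Finset.sum_mul, Finset.sum_smul]
  refine Finset.sum_congr rfl fun k _ => ?_
  rw [smul_smul, mul_assoc]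

lemma Bdd.sum {n : ℕ} {p : ℝ} (hp : 1 ≤ p) {κ : Type*} (s : Finset κ) (c : κ → ℂ)
    (m : κ → Finset (Fin n) → ℂ) (K : κ → ℝ) (h : ∀ k ∈ s, Bdd X p (m k) (K k)) :
    Bdd X p (fun A => ∑ k ∈ s, c k * m k A) (∑ k ∈ s, ‖c k‖ * K k) := by
  intro f
  rw [mul_sum_mult, Finset.sum_mul]
  refine (N_sum_le hp s (fun k ε => c k • HammingCube.mul (m k) f ε)).trans ?_
  refine Finset.sum_le_sum fun k hk => ?_
  rw [N_smul hp, mul_assoc]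
  exact mul_le_mul_of_nonneg_left (h k hk f) (norm_nonneg _)

lemma Bdd.restrict {n : ℕ} {p : ℝ} (hp : 1 ≤ p) {m : Finset (Fin n) → ℂ} {K : ℝ} (hK : 0 ≤ K)
    (h : Bdd X p m K) (B : Finset (Fin n)) : Bdd X p (fun A => m (A ∩ B)) K := by
  intro f
  rw [N_le_iff hp hK]
  have h1 := sum_mix B (fun ε => ‖HammingCube.mul (fun A => m (A ∩ B)) f ε‖ ^ p)
  have h2 := sum_mix B (fun ε => ‖f ε‖ ^ p)
  have h3 : (2 : ℝ) ^ n * ∑ ε, ‖HammingCube.mul (fun A => m (A ∩ B)) f ε‖ ^ p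
      ≤ 2 ^ n * (K ^ p * ∑ ε, ‖f ε‖ ^ p) := by
    rw [mul_left_comm, ← h1, ← h2, Finset.mul_sum]
    refine Finset.sum_le_sum fun ε _ => ?_
    simp_rw [mul_restrict]
    exact (N_le_iff hp hK _ _).1 (h (fun η => f (mix B η ε)))
  exact le_of_mul_le_mul_left h3 (by positivity)

/-- The product weights. -/
def W {n : ℕ} (l : ℝ) (B : Finset (Fin n)) : ℝ := l ^ B.card * (1 - l) ^ Bᶜ.card

lemma W_nonneg {n : ℕ} {l : ℝ} (h0 : 0 ≤ l) (h1 : l ≤ 1) (B : Finset (Fin n)) : 0 ≤ W l B := by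
  have : 0 ≤ 1 - l := by linarith
  unfold W; positivity

lemma sum_W {n : ℕ} (l : ℝ) : ∑ B : Finset (Fin n), W l B = 1 := by
  have h := Fintype.prod_add (fun _ : Fin n => l) (fun _ => 1 - l)
  simp only [Finset.prod_const] at h
  unfold W
  rw [← h]; simp

lemma card_eq_prod {n : ℕ} (A B : Finset (Fin n)) (a : ℂ) :
    a ^ (A ∩ B).card = ∏ i ∈ B, if i ∈ A then a else 1 := by
  rw [Finset.prod_ite_mem, Finset.prod_const, Finset.inter_comm]

lemma sum_W_pow {n : ℕ} (l : ℝ) (a b : ℂ) (A : Finset (Fin n)) :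
    ∑ B : Finset (Fin n), (W l B : ℂ) * (a ^ (A ∩ B).card * b ^ (A ∩ Bᶜ).card)
      = (l * a + (1 - l) * b) ^ A.card := by
  have h := Fintype.prod_add (fun i : Fin n => (l : ℂ) * (if i ∈ A then a else 1))
    (fun i => (1 - l : ℂ) * (if i ∈ A then b else 1))
  have e : (∏ i, ((l : ℂ) * (if i ∈ A then a else 1) + (1 - l : ℂ) * (if i ∈ A then b else 1)))
      = (l * a + (1 - l) * b) ^ A.card := by
    have := card_eq_prod A Finset.univ (l * a + (1 - l) * b)
    rw [Finset.inter_univ] at this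
    rw [this]
    refine Finset.prod_congr rfl fun i _ => ?_
    split_ifs <;> ring
  rw [← e, h]
  refine Finset.sum_congr rfl fun B _ => ?_
  rw [card_eq_prod, card_eq_prod, Finset.prod_mul_distrib, Finset.prod_mul_distrib]
  simp only [Finset.prod_const, W]
  push_cast
  ring

lemma sum_W_single {n : ℕ} (l : ℝ) (A : Finset (Fin n)) (i : Fin n) (hi : i ∈ A) :
    ∑ B : Finset (Fin n), W l B * (if A ∩ B = {i} then 1 else 0)
      = l * (1 - l) ^ (A.card - 1) := by
  have h := Fintype.prod_add
    (fun j : Fin n => l * (if j ∈ A then (if j = i then 1 else 0) else 1))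
    (fun j => (1 - l) * (if j = i then 0 else 1))
  have e : (∏ j, (l * (if j ∈ A then (if j = i then 1 else 0) else 1)
      + (1 - l) * (if j = i then 0 else 1))) = l * (1 - l) ^ (A.card - 1) := by
    rw [← Finset.mul_prod_erase _ _ (Finset.mem_univ i)]
    have : ∏ j ∈ Finset.univ.erase i, (l * (if j ∈ A then (if j = i then 1 else 0) else 1)
      + (1 - l) * (if j = i then 0 else 1)) = ∏ j ∈ Finset.univ.erase i,
        if j ∈ A then (1 - l) else 1 := by
      refine Finset.prod_congr rfl fun j hj => ?_
      have := (Finset.mem_erase.1 hj).1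
      split_ifs <;> simp
    rw [this, Finset.prod_ite_mem, Finset.prod_const, Finset.erase_inter, Finset.univ_inter,
      Finset.card_erase_of_mem hi]
    simp [hi]
  rw [← e, h]
  refine Finset.sum_congr rfl fun B _ => ?_
  rw [Finset.prod_mul_distrib, Finset.prod_mul_distrib]
  simp only [Finset.prod_const, W]
  have : (if A ∩ B = {i} then (1 : ℝ) else 0)
      = (∏ j ∈ B, if j ∈ A then (if j = i then (1 : ℝ) else 0) else 1)
        * ∏ j ∈ Bᶜ, if j = i then (0 : ℝ) else 1 := by
    split_ifs with hAB
    · have hiB : i ∈ B := by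
        have : i ∈ A ∩ B := by rw [hAB]; simp
        exact (Finset.mem_inter.1 this).2
      rw [Finset.prod_eq_one, Finset.prod_eq_one, mul_one]
      · intro j hj
        rw [if_neg]
        rintro rfl
        exact (Finset.mem_compl.1 hj) hiB
      · intro j hj
        by_cases hjA : j ∈ A
        · have : j ∈ A ∩ B := Finset.mem_inter.2 ⟨hjA, hj⟩
          rw [hAB, Finset.mem_singleton] at this
          simp [this]
        · simp [hjA]
    · by_cases hiB : i ∈ B
      · have : ∃ j ∈ A ∩ B, j ≠ i := by
          by_contra hc
          push Not at hc
          apply hAB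
          ext j
          rw [Finset.mem_singleton]
          exact ⟨hc j, fun h => h ▸ Finset.mem_inter.2 ⟨hi, hiB⟩⟩
        obtain ⟨j, hj, hji⟩ := this
        rw [Finset.mem_inter] at hj
        rw [Finset.prod_eq_zero hj.2, zero_mul]
        simp [hj.1, hji]
      · rw [Finset.prod_eq_zero (i := i) (Finset.mem_compl.2 hiB) (by simp), mul_zero]
  rw [this]; ring

lemma card_eq_one_sum {n : ℕ} (A B : Finset (Fin n)) :
    (if (A ∩ B).card = 1 then (1 : ℝ) else 0) = ∑ i ∈ A, if A ∩ B = {i} then (1 : ℝ) else 0 := by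
  split_ifs with h
  · obtain ⟨j, hj⟩ := Finset.card_eq_one.1 h
    have hjA : j ∈ A := by
      have : j ∈ A ∩ B := by rw [hj]; simp
      exact (Finset.mem_inter.1 this).1
    rw [hj]
    simp [hjA]
  · rw [Finset.sum_eq_zero]
    intro i _
    rw [if_neg]
    intro h'
    exact h (by rw [h']; simp)

lemma sum_W_card {n : ℕ} (l : ℝ) (A : Finset (Fin n)) :
    ∑ B : Finset (Fin n), W l B * (if (A ∩ B).card = 1 then 1 else 0)
      = A.card * (l * (1 - l) ^ (A.card - 1)) := by
  simp_rw [card_eq_one_sum, Finset.mul_sum]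
  rw [Finset.sum_comm, Finset.sum_congr rfl fun i hi => sum_W_single l A i hi]
  simp
lemma lpNorm_eq {n : ℕ} (p : ℝ) (f : (Fin n → Bool) → X) :
    lpNorm p f = ((2 ^ n : ℝ)⁻¹) ^ (1 / p) * N p f := by
  unfold lpNorm N
  rw [Real.mul_rpow (by positivity) (by positivity)]

lemma filter_card_one {n : ℕ} {Y : Type*} [AddCommMonoid Y] (g : Finset (Fin n) → Y) :
    ∑ A : Finset (Fin n), (if A.card = 1 then g A else 0) = ∑ i : Fin n, g {i} := by
  rw [← Finset.sum_filter]
  have : (Finset.univ.filter fun A : Finset (Fin n) => A.card = 1)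
      = Finset.univ.map ⟨fun i : Fin n => ({i} : Finset (Fin n)), Finset.singleton_injective⟩ := by
    ext A
    simp [Finset.card_eq_one, eq_comm]
  rw [this, Finset.sum_map]
  rfl

lemma Rad_eq {n : ℕ} (f : (Fin n → Bool) → X) :
    Rad f = mul (fun A => if A.card = 1 then 1 else 0) f := by
  funext ε
  have := filter_card_one (fun A : Finset (Fin n) => walsh A ε • coeff f A)
  simp only [Rad, mul]
  have h2 : ∀ A : Finset (Fin n), ((if A.card = 1 then (1 : ℂ) else 0) * (walsh A ε : ℂ)) • coeff f A
      = if A.card = 1 then walsh A ε • coeff f A else 0 := by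
    intro A
    split_ifs <;> simp
  simp_rw [h2, this]
  simp [walsh]

lemma Bdd_pow_mix {n : ℕ} {p : ℝ} (hp : 1 ≤ p) {a b : ℂ} {K K' : ℝ} (hK : 0 ≤ K) (hK' : 0 ≤ K')
    (ha : Bdd X p (fun A : Finset (Fin n) => a ^ A.card) K)
    (hb : Bdd X p (fun A : Finset (Fin n) => b ^ A.card) K') {l : ℝ} (h0 : 0 ≤ l) (h1 : l ≤ 1) :
    Bdd X p (fun A : Finset (Fin n) => (l * a + (1 - l) * b) ^ A.card) (K * K') := by
  have := Bdd.sum hp Finset.univ (fun B : Finset (Fin n) => (W l B : ℂ))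
    (fun B A => a ^ (A ∩ B).card * b ^ (A ∩ Bᶜ).card) (fun _ => K * K')
    (fun B _ => Bdd.mul hK (ha.restrict hp hK B) (hb.restrict hp hK' Bᶜ))
  simp_rw [sum_W_pow] at this
  refine this.mono (le_of_eq ?_)
  rw [← Finset.sum_mul]
  have h : ∀ B : Finset (Fin n), ‖(W l B : ℂ)‖ = W l B := fun B => by
    rw [Complex.norm_real, Real.norm_of_nonneg (W_nonneg h0 h1 B)]
  simp_rw [h, sum_W, one_mul]

lemma Bdd_pow_one {n : ℕ} {p : ℝ} : Bdd X p (fun A : Finset (Fin n) => (1 : ℂ) ^ A.card) 1 := by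
  simp only [one_pow]
  exact Bdd.one

lemma walsh_not {n : ℕ} (A : Finset (Fin n)) (ε : Fin n → Bool) :
    walsh A (fun i => !ε i) = (-1) ^ A.card * walsh A ε := by
  unfold walsh
  rw [← Finset.prod_const, ← Finset.prod_mul_distrib]
  refine Finset.prod_congr rfl fun i _ => ?_
  cases h : ε i <;> simp [sgn, h]

lemma Bdd_pow_neg_one {n : ℕ} {p : ℝ} :
    Bdd X p (fun A : Finset (Fin n) => (-1 : ℂ) ^ A.card) 1 := by
  intro f
  have : mul (fun A : Finset (Fin n) => (-1 : ℂ) ^ A.card) f = fun ε => f (fun i => !ε i) := by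
    funext ε
    rw [← walsh_inversion f]
    simp only [mul, walsh_not]
    refine Finset.sum_congr rfl fun A _ => ?_
    rw [← Complex.coe_smul]
    push_cast
    rfl
  rw [this, one_mul]
  unfold N
  apply le_of_eq
  congr 1
  let e : Equiv.Perm (Fin n → Bool) := Function.Involutive.toPerm (fun ε i => !ε i)
    (fun ε => by simp)
  exact Equiv.sum_comp e (fun ε => ‖f ε‖ ^ p)

lemma Bdd_pow_real {n : ℕ} {p : ℝ} (hp : 1 ≤ p) {r : ℝ} (h0 : -1 ≤ r) (h1 : r ≤ 1) :
    Bdd X p (fun A : Finset (Fin n) => (r : ℂ) ^ A.card) 1 := by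
  have := Bdd_pow_mix (n := n) (X := X) hp zero_le_one zero_le_one Bdd_pow_one Bdd_pow_neg_one
    (l := (1 + r) / 2) (by linarith) (by linarith)
  convert this using 3
  · push_cast; ring
  · norm_num

lemma third_le (k : ℕ) : (1 / 3 : ℝ) ≤ (1 - 1 / ((k : ℝ) + 1)) ^ k := by
  rcases Nat.eq_zero_or_pos k with rfl | hk
  · norm_num
  have hk' : (0 : ℝ) < k := by exact_mod_cast hk
  have h1 : (1 - 1 / ((k : ℝ) + 1)) = (1 + 1 / (k : ℝ))⁻¹ := by field_simp; ring
  rw [h1, inv_pow, one_div]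
  apply inv_anti₀ (by positivity)
  have h2 : 1 + 1 / (k : ℝ) ≤ Real.exp (1 / k) := by
    have := Real.add_one_le_exp (1 / (k : ℝ)); linarith
  calc (1 + 1 / (k : ℝ)) ^ k ≤ Real.exp (1 / k) ^ k := by gcongr
    _ = Real.exp 1 := by rw [← Real.exp_nat_mul]; congr 1; field_simp
    _ ≤ 3 := by have := Real.exp_one_lt_d9; linarith

lemma Bdd_card {n : ℕ} {p : ℝ} (hp : 1 ≤ p) {K : ℝ} (hK : 0 ≤ K)
    (h : Bdd X p (fun A : Finset (Fin n) => if A.card = 1 then 1 else 0) K) (k : ℕ) :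
    Bdd X p (fun A : Finset (Fin n) => if A.card = k then 1 else 0) ((3 * K) ^ k) := by
  induction k with
  | zero =>
    have := Bdd_pow_real (n := n) (X := X) hp (r := 0) (by norm_num) (by norm_num)
    rw [pow_zero]
    convert this using 2 with A
    simp [zero_pow_eq]
  | succ k ih =>
    set l : ℝ := 1 / ((k : ℝ) + 1) with hl
    have hl0 : 0 ≤ l := by positivity
    have hl1 : l ≤ 1 := by
      rw [hl, div_le_one (by positivity)]
      have : (0 : ℝ) ≤ k := by positivity
      linarith
    have h3 := third_le k
    rw [← hl] at h3
    set c : ℝ := (1 - l) ^ k with hc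
    have hc0 : 0 < c := by linarith
    have := Bdd.sum hp Finset.univ (fun B : Finset (Fin n) => ((c⁻¹ * W l B : ℝ) : ℂ))
      (fun B A => (if (A ∩ B).card = 1 then (1 : ℂ) else 0) *
        (if (A ∩ Bᶜ).card = k then (1 : ℂ) else 0)) (fun _ => K * (3 * K) ^ k)
      (fun B _ => Bdd.mul hK (h.restrict hp hK B) (ih.restrict hp (by positivity) Bᶜ))
    have e : (fun A : Finset (Fin n) => ∑ B : Finset (Fin n), ((c⁻¹ * W l B : ℝ) : ℂ) *
        ((if (A ∩ B).card = 1 then (1 : ℂ) else 0) * (if (A ∩ Bᶜ).card = k then (1 : ℂ) else 0)))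
        = fun A => if A.card = k + 1 then 1 else 0 := by
      funext A
      have hAB : ∀ B : Finset (Fin n), (A ∩ B).card + (A ∩ Bᶜ).card = A.card := by
        intro B
        rw [← Finset.sdiff_eq_inter_compl]
        exact Finset.card_inter_add_card_sdiff A B
      have h4 : ∀ B : Finset (Fin n), ((c⁻¹ * W l B : ℝ) : ℂ) *
        ((if (A ∩ B).card = 1 then (1 : ℂ) else 0) * (if (A ∩ Bᶜ).card = k then (1 : ℂ) else 0))
        = ((c⁻¹ * (W l B * if (A ∩ B).card = 1 then 1 else 0) : ℝ) : ℂ)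
          * (if A.card = k + 1 then 1 else 0) := by
        intro B
        have := hAB B
        by_cases h1 : (A ∩ B).card = 1
        · by_cases h2 : (A ∩ Bᶜ).card = k
          · have h5 : A.card = k + 1 := by omega
            simp [h1, h2, h5]
          · have h5 : A.card ≠ k + 1 := by omega
            simp [h2, h5]
        · simp [h1]
      simp_rw [h4]
      rw [← Finset.sum_mul, ← Complex.ofReal_sum, ← Finset.mul_sum, sum_W_card]
      split_ifs with hA
      · rw [hA, mul_one]
        have : (((k + 1 : ℕ) : ℝ) * (l * (1 - l) ^ (k + 1 - 1))) = c := by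
          rw [Nat.add_sub_cancel, hc, hl]
          push_cast
          field_simp
        rw [this, inv_mul_cancel₀ hc0.ne']
        simp
      · rw [mul_zero]
    rw [e] at this
    refine this.mono ?_
    rw [← Finset.sum_mul]
    have h6 : ∀ B : Finset (Fin n), ‖((c⁻¹ * W l B : ℝ) : ℂ)‖ = c⁻¹ * W l B := fun B => by
      have := W_nonneg hl0 hl1 B
      rw [Complex.norm_real, Real.norm_of_nonneg (by positivity)]
    simp_rw [h6]
    rw [← Finset.mul_sum, sum_W, mul_one, pow_succ]
    have : c⁻¹ ≤ 3 := by
      rw [inv_le_comm₀ hc0 (by norm_num)]; linarith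
    calc c⁻¹ * (K * (3 * K) ^ k) ≤ 3 * (K * (3 * K) ^ k) := by gcongr
      _ = _ := by ring

lemma Bdd_disc {n : ℕ} {p : ℝ} (hp : 1 ≤ p) {K : ℝ} (hK : 0 ≤ K)
    (h : Bdd X p (fun A : Finset (Fin n) => if A.card = 1 then 1 else 0) K) {ρ : ℂ}
    (hρ : ‖ρ‖ * (3 * K) ≤ 1 / 2) : Bdd X p (fun A : Finset (Fin n) => ρ ^ A.card) 2 := by
  have := Bdd.sum hp (Finset.range (n + 1)) (fun k => ρ ^ k)
    (fun k A => if A.card = k then 1 else 0) (fun k => (3 * K) ^ k)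
    (fun k _ => Bdd_card hp hK h k)
  have e : (fun A : Finset (Fin n) => ∑ k ∈ Finset.range (n + 1),
      ρ ^ k * (if A.card = k then 1 else 0)) = fun A => ρ ^ A.card := by
    funext A
    have : A.card ≤ n := by simpa using Finset.card_le_univ A
    have h2 : A.card ∈ Finset.range (n + 1) := by simp; omega
    simp only [mul_ite, mul_one, mul_zero, Finset.sum_ite_eq, h2, if_true]
  rw [e] at this
  refine this.mono ?_
  have h2 : ∀ k ∈ Finset.range (n + 1), ‖ρ ^ k‖ * (3 * K) ^ k ≤ (1 / 2 : ℝ) ^ k := by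
    intro k _
    rw [norm_pow, ← mul_pow]
    gcongr
  refine (Finset.sum_le_sum h2).trans ?_
  have := Summable.sum_le_tsum (Finset.range (n + 1)) (fun k _ => by positivity)
    (summable_geometric_two)
  rwa [tsum_geometric_two] at this

lemma KConvex.exists_disc (hX : KConvex X) : ∃ q : ℝ, 1 < q ∧ ∃ r : ℝ, 0 < r ∧ r ≤ 1 ∧
    ∀ (n : ℕ) (ρ : ℂ), ‖ρ‖ ≤ r → Bdd X q (fun A : Finset (Fin n) => ρ ^ A.card) 2 := by
  obtain ⟨q, hq, M, hM⟩ := hX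
  refine ⟨q, hq, 1 / (6 * max M 1), by positivity, ?_, ?_⟩
  · rw [div_le_one (by positivity)]
    have := le_max_right M 1
    linarith
  intro n ρ hρ
  refine Bdd_disc hq.le (K := max M 1) (by positivity) ?_ ?_
  · intro f
    have h := hM n f
    rw [Rad_eq, lpNorm_eq, lpNorm_eq, mul_left_comm] at h
    have h2 := le_of_mul_le_mul_left h (by positivity)
    exact h2.trans (mul_le_mul_of_nonneg_right (le_max_left _ _) (N_nonneg _))
  · have h1 : 0 < max M 1 := by positivity
    calc ‖ρ‖ * (3 * max M 1) ≤ 1 / (6 * max M 1) * (3 * max M 1) := by gcongr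
      _ = 1 / 2 := by field_simp; norm_num

/-- rhombus boundedness from the vertices -/
lemma Bdd_rhombus {n : ℕ} {p : ℝ} (hp : 1 ≤ p) {r M : ℝ} (hr : 0 < r) (hM : 0 ≤ M)
    (h : Bdd X p (fun A : Finset (Fin n) => (Complex.I * r) ^ A.card) M) {ρ : ℂ}
    (hρ : |ρ.re| + |ρ.im| / r ≤ 1) :
    Bdd X p (fun A : Finset (Fin n) => ρ ^ A.card) (M ^ 2) := by
  have hneg : Bdd X p (fun A : Finset (Fin n) => (-(Complex.I * r)) ^ A.card) M := by
    have := Bdd.mul (X := X) zero_le_one (Bdd_pow_neg_one (n := n) (p := p)) h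
    rw [one_mul] at this
    convert this using 2 with A
    rw [← mul_pow]; congr 1; ring
  -- the imaginary axis
  have him : ∀ y : ℝ, |y| ≤ r → Bdd X p (fun A : Finset (Fin n) => (Complex.I * y) ^ A.card)
      (M ^ 2) := by
    intro y hy
    have hy' := abs_le.1 hy
    have := Bdd_pow_mix hp hM hM h hneg (l := (1 + y / r) / 2)
      (by
        have : -1 ≤ y / r := by rw [le_div_iff₀ hr]; linarith
        linarith)
      (by
        have : y / r ≤ 1 := by rw [div_le_iff₀ hr]; linarith
        linarith)
    rw [sq]
    convert this using 3
    have : (r : ℂ) ≠ 0 := by exact_mod_cast hr.ne'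
    push_cast
    field_simp
    ring
  by_cases hl : |ρ.re| = 1
  · have him0 : ρ.im = 0 := by
      have : |ρ.im| / r ≤ 0 := by linarith
      have h3 : |ρ.im| ≤ 0 := by
        by_contra hc
        push Not at hc
        have : 0 < |ρ.im| / r := by positivity
        linarith
      exact abs_nonpos_iff.1 h3
    have hρ' : ρ = ((ρ.re : ℝ) : ℂ) := by apply Complex.ext <;> simp [him0]
    have h2 := abs_le.1 hl.le
    have e1 := Bdd_pow_real (n := n) (X := X) hp h2.1 h2.2
    have e2 := him 0 (by simp [hr.le])
    have e3 := Bdd_pow_mix hp zero_le_one (by positivity) e1 e2 (l := 1) zero_le_one le_rfl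
    rw [one_mul] at e3
    convert e3 using 3
    simpa using hρ'
  · have hlt : |ρ.re| < 1 := by
      have : 0 ≤ |ρ.im| / r := by positivity
      exact lt_of_le_of_ne (by linarith) hl
    have hpos : 0 < 1 - |ρ.re| := by linarith
    -- ρ = |re| * sign + (1-|re|) * (I * y)
    have e1 := Bdd_pow_real (n := n) (X := X) hp (r := SignType.sign ρ.re)
      (by rcases lt_trichotomy ρ.re 0 with h | h | h <;> simp [h])
      (by rcases lt_trichotomy ρ.re 0 with h | h | h <;> simp [h])
    have e2 := him (ρ.im / (1 - |ρ.re|)) (by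
      rw [abs_div, abs_of_pos hpos, div_le_iff₀ hpos]
      have : |ρ.im| / r ≤ 1 - |ρ.re| := by linarith
      rw [div_le_iff₀ hr] at this
      linarith)
    have e3 := Bdd_pow_mix hp zero_le_one (by positivity) e1 e2 (l := |ρ.re|) (abs_nonneg _) hlt.le
    rw [one_mul] at e3
    convert e3 using 3
    have h4 : |ρ.re| * (SignType.sign ρ.re : ℝ) = ρ.re := by
      rw [mul_comm]; exact sign_mul_abs _
    have h5 : (1 - |ρ.re|) * (ρ.im / (1 - |ρ.re|)) = ρ.im := by field_simp
    have h6 : ((|ρ.re| : ℝ) : ℂ) * (((SignType.sign ρ.re : ℝ)) : ℂ) = ((ρ.re : ℝ) : ℂ) := by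
      rw [← Complex.ofReal_mul, h4]
    have h7 : (1 - ((|ρ.re| : ℝ) : ℂ)) * (((ρ.im / (1 - |ρ.re|) : ℝ)) : ℂ) = ((ρ.im : ℝ) : ℂ) := by
      rw [← Complex.ofReal_one, ← Complex.ofReal_sub, ← Complex.ofReal_mul, h5]
    rw [mul_left_comm, h6, h7, mul_comm Complex.I, Complex.re_add_im]
/-- Hölder estimate on the boundary lines. -/
lemma stein_boundary {n : ℕ} {y p : ℝ} (hy0 : 0 < y) (hy1 : y < 1) (hp : 0 < p)
    (F H : (Fin n → Bool) → ℝ) (hF0 : ∀ ε, 0 ≤ F ε) (hH0 : ∀ ε, 0 ≤ H ε)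
    (hF : ∑ ε, F ε ^ p = 1) (hH : ∑ ε, H ε ^ p = 1)
    (φ : (Fin n → Bool) → X) (γ : (Fin n → Bool) → ℂ)
    (hφ : ∀ ε, ‖φ ε‖ ≤ F ε ^ (p * y)) (hγ : ∀ ε, ‖γ ε‖ ≤ H ε ^ (p * (1 - y)))
    (g : (Fin n → Bool) → (X →L[ℂ] ℂ)) (hg : ∀ ε, ‖g ε‖ ≤ 1)
    (m : Finset (Fin n) → ℂ) (hm : Bdd X (1 / y) m 2) :
    ‖∑ ε, γ ε * g ε (mul m φ ε)‖ ≤ 2 := by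
  have hy1' : 0 < 1 - y := by linarith
  have hconj : (1 / y).HolderConjugate (1 / (1 - y)) := by
    rw [Real.holderConjugate_iff]
    refine ⟨?_, ?_⟩
    · rw [lt_div_iff₀ hy0]; linarith
    · simp
  have hNφ : N (1 / y) φ ≤ 1 := by
    unfold N
    apply Real.rpow_le_one (by positivity) _ (by positivity)
    refine le_trans ?_ hF.le
    refine Finset.sum_le_sum fun ε _ => ?_
    calc ‖φ ε‖ ^ (1 / y) ≤ (F ε ^ (p * y)) ^ (1 / y) :=
          Real.rpow_le_rpow (norm_nonneg _) (hφ ε) (by positivity)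
      _ = F ε ^ p := by
          rw [← Real.rpow_mul (hF0 ε)]; congr 1; field_simp
  have hNγ : (∑ ε, |‖γ ε‖| ^ (1 / (1 - y))) ^ (1 / (1 / (1 - y))) ≤ 1 := by
    apply Real.rpow_le_one (by positivity) _ (by positivity)
    refine le_trans ?_ hH.le
    refine Finset.sum_le_sum fun ε _ => ?_
    rw [abs_norm]
    calc ‖γ ε‖ ^ (1 / (1 - y)) ≤ (H ε ^ (p * (1 - y))) ^ (1 / (1 - y)) :=
          Real.rpow_le_rpow (norm_nonneg _) (hγ ε) (by positivity)
      _ = H ε ^ p := by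
          rw [← Real.rpow_mul (hH0 ε)]; congr 1; field_simp
  have hu : N (1 / y) (mul m φ) ≤ 2 := (hm φ).trans (by linarith)
  calc ‖∑ ε, γ ε * g ε (mul m φ ε)‖ ≤ ∑ ε, ‖mul m φ ε‖ * ‖γ ε‖ := by
        refine (norm_sum_le _ _).trans (Finset.sum_le_sum fun ε _ => ?_)
        rw [norm_mul, mul_comm]
        refine mul_le_mul_of_nonneg_right ?_ (norm_nonneg _)
        exact (g ε).le_of_opNorm_le (hg ε) _ |>.trans (by rw [one_mul])
    _ ≤ (∑ ε, |‖mul m φ ε‖| ^ (1 / y)) ^ (1 / (1 / y)) *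
          (∑ ε, |‖γ ε‖| ^ (1 / (1 - y))) ^ (1 / (1 / (1 - y))) :=
        Real.inner_le_Lp_mul_Lq _ _ _ hconj
    _ ≤ 2 * 1 := by
        refine mul_le_mul ?_ hNγ (by positivity) (by norm_num)
        simp only [abs_norm]
        exact hu
    _ = 2 := by norm_num

lemma abs_walsh {n : ℕ} (A : Finset (Fin n)) (ε : Fin n → Bool) : |walsh A ε| = 1 := by
  unfold walsh
  rw [Finset.abs_prod]
  refine Finset.prod_eq_one fun i _ => ?_
  cases h : ε i <;> simp [sgn]

lemma norm_coeff_le {n : ℕ} (f : (Fin n → Bool) → X) (C : ℝ) (hf : ∀ ε, ‖f ε‖ ≤ C)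
    (A : Finset (Fin n)) : ‖coeff f A‖ ≤ C := by
  unfold coeff
  rw [norm_smul, norm_inv, Real.norm_of_nonneg (by positivity : (0 : ℝ) ≤ 2 ^ n)]
  rw [inv_mul_le_iff₀ (by positivity)]
  refine (norm_sum_le _ _).trans ?_
  calc ∑ δ : Fin n → Bool, ‖walsh A δ • f δ‖ ≤ ∑ _δ : Fin n → Bool, C := by
        refine Finset.sum_le_sum fun δ _ => ?_
        rw [norm_smul, Real.norm_eq_abs, abs_walsh, one_mul]
        exact hf δ
    _ = 2 ^ n * C := by simp

lemma norm_mul_le' {n : ℕ} (m : Finset (Fin n) → ℂ) (hm : ∀ A, ‖m A‖ ≤ 1)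
    (f : (Fin n → Bool) → X) (C : ℝ) (hf : ∀ ε, ‖f ε‖ ≤ C) (ε : Fin n → Bool) :
    ‖mul m f ε‖ ≤ 2 ^ n * C := by
  unfold mul
  refine (norm_sum_le _ _).trans ?_
  calc ∑ A : Finset (Fin n), ‖(m A * (walsh A ε : ℂ)) • coeff f A‖
      ≤ ∑ _A : Finset (Fin n), C := by
        refine Finset.sum_le_sum fun A _ => ?_
        rw [norm_smul, norm_mul, Complex.norm_real, Real.norm_eq_abs, abs_walsh, mul_one]
        calc ‖m A‖ * ‖coeff f A‖ ≤ 1 * ‖coeff f A‖ := by gcongr; exact hm A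
          _ ≤ C := by rw [one_mul]; exact norm_coeff_le f C hf A
    _ = 2 ^ n * C := by simp

/-- the interpolating curve -/
def rhoC (c : ℝ) (z : ℂ) : ℂ := Complex.I * c * (z * Complex.exp (z ^ 2))

lemma rhoC_norm_le {c : ℝ} (hc : 0 ≤ c) {z : ℂ} (h0 : 0 ≤ z.re) (h1 : z.re ≤ 1) :
    ‖rhoC c z‖ ≤ 6 * c := by
  unfold rhoC
  rw [norm_mul, norm_mul, norm_mul, Complex.norm_I, one_mul, Complex.norm_real,
    Real.norm_of_nonneg hc, Complex.norm_exp]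
  have e1 : (z ^ 2).re = z.re ^ 2 - z.im ^ 2 := by rw [sq, Complex.mul_re]; ring
  have e2 : ‖z‖ ≤ 1 + |z.im| := by
    refine (Complex.norm_le_abs_re_add_abs_im z).trans ?_
    rw [abs_of_nonneg h0]; linarith
  have e3 : 1 + |z.im| ≤ 2 * Real.exp (z.im ^ 2) := by
    have := Real.add_one_le_exp (z.im ^ 2)
    nlinarith [sq_abs z.im, sq_nonneg (|z.im| - 1), abs_nonneg z.im]
  have e4 : Real.exp (z.re ^ 2 - z.im ^ 2) ≤ 3 * Real.exp (-z.im ^ 2) := by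
    have : Real.exp (z.re ^ 2 - z.im ^ 2) ≤ Real.exp 1 * Real.exp (-z.im ^ 2) := by
      rw [← Real.exp_add]
      apply Real.exp_le_exp.2
      nlinarith
    have h3 : Real.exp 1 ≤ 3 := by have := Real.exp_one_lt_d9; linarith
    exact this.trans (by gcongr)
  rw [e1]
  have : ‖z‖ * Real.exp (z.re ^ 2 - z.im ^ 2) ≤ 6 := by
    calc ‖z‖ * Real.exp (z.re ^ 2 - z.im ^ 2)
        ≤ (2 * Real.exp (z.im ^ 2)) * (3 * Real.exp (-z.im ^ 2)) := by
          gcongr; exact e2.trans e3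
      _ = 6 * (Real.exp (z.im ^ 2) * Real.exp (-z.im ^ 2)) := by ring
      _ = 6 := by rw [← Real.exp_add]; simp
  nlinarith

lemma rhoC_real {c : ℝ} {z : ℂ} (h0 : z.re = 0) :
    rhoC c z = ((-(c * z.im * Real.exp (-z.im ^ 2)) : ℝ) : ℂ) := by
  have hz : z = z.im * Complex.I := by apply Complex.ext <;> simp [h0]
  unfold rhoC
  have e : z ^ 2 = ((-z.im ^ 2 : ℝ) : ℂ) := by
    conv_lhs => rw [hz]
    rw [mul_pow, Complex.I_sq]; push_cast; ring
  rw [e, ← Complex.ofReal_exp]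
  generalize hE : Real.exp (-z.im ^ 2) = E
  conv_lhs => rw [hz]
  push_cast
  linear_combination (c * z.im * E) * Complex.I_sq

lemma N_eq_zero {ι : Type*} [Fintype ι] {p : ℝ} (hp : 1 ≤ p) (f : ι → X) (h : N p f = 0) :
    ∀ i, f i = 0 := by
  have := fact_p hp
  rw [N_eq hp, norm_eq_zero] at h
  intro i
  have h2 := congrArg (fun v : PiLp (ENNReal.ofReal p) (fun _ : ι => X) => v i) h
  simpa using h2

lemma mul_const_smul {n : ℕ} (m : Finset (Fin n) → ℂ) (c : ℂ) (f : (Fin n → Bool) → X) :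
    mul m (fun ε => c • f ε) = fun ε => c • mul m f ε := by
  funext ε
  unfold mul coeff
  rw [Finset.smul_sum]
  refine Finset.sum_congr rfl fun A _ => ?_
  simp only [Finset.smul_sum]
  refine Finset.sum_congr rfl fun δ _ => ?_
  simp only [← Complex.coe_smul, smul_smul]
  congr 1; ring

lemma stein_interp {p q r : ℝ} (hp : 1 < p) (hq : 1 < q) (hr : 0 < r) (hr1 : r ≤ 1) :
    ∃ r' : ℝ, 0 < r' ∧ r' ≤ 1 ∧ ∀ n : ℕ,
      (∀ ρ : ℂ, ‖ρ‖ ≤ r → Bdd X q (fun A : Finset (Fin n) => ρ ^ A.card) 2) →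
      Bdd X p (fun A : Finset (Fin n) => (Complex.I * r') ^ A.card) 2 := by
  classical
  have hp0 : 0 < p := by linarith
  have hq0 : 0 < q := by linarith
  have hpi : 1 / p < 1 := by rw [div_lt_one hp0]; exact hp
  have hqi : 1 / q < 1 := by rw [div_lt_one hq0]; exact hq
  have hpi0 : 0 < 1 / p := by positivity
  have hqi0 : 0 < 1 / q := by positivity
  obtain ⟨θ, hθ0, hθ1, hθ2⟩ : ∃ θ : ℝ, 0 < θ ∧ θ < 1 / p ∧ θ < 1 - 1 / p := by
    obtain ⟨θ, h1, h2⟩ := exists_between (show 0 < min (1 / p) (1 - 1 / p) from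
      lt_min hpi0 (by linarith))
    exact ⟨θ, h1, h2.trans_le (min_le_left _ _), h2.trans_le (min_le_right _ _)⟩
  have hθlt : θ < 1 := by linarith
  have h1θ : 0 < 1 - θ := by linarith
  set x1 : ℝ := 1 / q with hx1
  set x0 : ℝ := (1 / p - θ * x1) / (1 - θ) with hx0
  have hx0pos : 0 < x0 := by
    apply div_pos _ h1θ
    nlinarith
  have hx0lt : x0 < 1 := by
    rw [hx0, div_lt_one h1θ]
    nlinarith
  have hxθ : (1 - θ) * x0 + θ * x1 = 1 / p := by rw [hx0]; field_simp; ring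
  clear_value x0
  set c : ℝ := r / 6 with hc
  have hc0 : 0 < c := by positivity
  have h6c : 6 * c = r := by rw [hc]; ring
  have hρθ : rhoC c (θ : ℂ) = Complex.I * ((c * (θ * Real.exp (θ ^ 2)) : ℝ) : ℂ) := by
    unfold rhoC; push_cast; ring
  refine ⟨c * (θ * Real.exp (θ ^ 2)), by positivity, ?_, ?_⟩
  · have := rhoC_norm_le hc0.le (z := (θ : ℂ)) (by simpa using hθ0.le) (by simpa using hθlt.le)
    rw [hρθ, norm_mul, Complex.norm_I, one_mul, Complex.norm_real,
      Real.norm_of_nonneg (by positivity), h6c] at this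
    linarith
  intro n hB f
  rw [← hρθ]
  set h := mul (fun A : Finset (Fin n) => rhoC c (θ : ℂ) ^ A.card) f with hh
  by_cases ha : N p f = 0
  · have hf := N_eq_zero hp.le f ha
    have : h = fun _ => 0 := by
      rw [hh]
      have hf' : f = fun ε => (0 : ℂ) • f ε := by funext ε; simp [hf]
      rw [hf', mul_const_smul]; simp
    rw [this, ha]
    unfold N
    simp only [norm_zero, Real.zero_rpow hp0.ne', Finset.sum_const_zero]
    rw [Real.zero_rpow (by positivity)]; simp
  by_cases hb : N p h = 0
  · rw [hb]; exact mul_nonneg (by norm_num) (N_nonneg _)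
  have ha' : 0 < N p f := lt_of_le_of_ne (N_nonneg _) (Ne.symm ha)
  have hb' : 0 < N p h := lt_of_le_of_ne (N_nonneg _) (Ne.symm hb)
  set a := N p f with hadef
  set b := N p h with hbdef
  set F : (Fin n → Bool) → ℝ := fun ε => ‖f ε‖ / a with hFdef
  set H : (Fin n → Bool) → ℝ := fun ε => ‖h ε‖ / b with hHdef
  have hF0 : ∀ ε, 0 ≤ F ε := fun ε => by positivity
  have hH0 : ∀ ε, 0 ≤ H ε := fun ε => by positivity
  have hF : ∑ ε, F ε ^ p = 1 := by
    simp only [hFdef]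
    simp_rw [fun ε => Real.div_rpow (norm_nonneg (f ε)) ha'.le p]
    rw [← Finset.sum_div, ← N_pow hp.le, div_self (Real.rpow_pos_of_pos ha' p).ne']
  have hH : ∑ ε, H ε ^ p = 1 := by
    simp only [hHdef]
    simp_rw [fun ε => Real.div_rpow (norm_nonneg (h ε)) hb'.le p]
    rw [← Finset.sum_div, ← N_pow hp.le, div_self (Real.rpow_pos_of_pos hb' p).ne']
  choose g hg1 hg2 using fun ε => exists_dual_vector'' ℂ (h ε)
  let x : ℂ → ℂ := fun z => (1 - z) * x0 + z * x1
  have hxre : ∀ z, (x z).re = (1 - z.re) * x0 + z.re * x1 := fun z => by simp [x]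
  let φ : ℂ → (Fin n → Bool) → X := fun z ε =>
    Complex.exp (p * x z * (Real.log (F ε) : ℝ)) • ((‖f ε‖⁻¹ : ℝ) : ℂ) • f ε
  let ι : (Fin n → Bool) → ℂ := fun ε => if h ε = 0 then 0 else 1
  let γ : ℂ → (Fin n → Bool) → ℂ := fun z ε =>
    ι ε * Complex.exp (p * (1 - x z) * (Real.log (H ε) : ℝ))
  have hfn : ∀ ε, ‖((‖f ε‖⁻¹ : ℝ) : ℂ) • f ε‖ ≤ 1 := by
    intro ε
    rw [norm_smul, Complex.norm_real, norm_inv, norm_norm]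
    exact inv_mul_le_one
  have hιn : ∀ ε, ‖ι ε‖ ≤ 1 := by
    intro ε; simp only [ι]; split_ifs <;> simp
  have hφn : ∀ z ε, ‖φ z ε‖ ≤ F ε ^ (p * (x z).re) := by
    intro z ε
    by_cases hfe : f ε = 0
    · simp only [φ, hfe, smul_zero, norm_zero]; positivity
    · have hFp : 0 < F ε := div_pos (norm_pos_iff.2 hfe) ha'
      simp only [φ]
      rw [norm_smul, Complex.norm_exp]
      calc _ ≤ Real.exp ((p * x z * (Real.log (F ε) : ℝ) : ℂ).re) * 1 := by
            gcongr; exact hfn ε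
        _ = _ := by
            rw [mul_one, Real.rpow_def_of_pos hFp, Complex.re_mul_ofReal, Complex.re_ofReal_mul,
              mul_comm]
  have hγn : ∀ z ε, ‖γ z ε‖ ≤ H ε ^ (p * (1 - (x z).re)) := by
    intro z ε
    by_cases hhe : h ε = 0
    · simp only [γ, ι, hhe, if_true, zero_mul, norm_zero]
      exact Real.rpow_nonneg (hH0 ε) _
    · have hHp : 0 < H ε := div_pos (norm_pos_iff.2 hhe) hb'
      simp only [γ, ι, hhe, if_false, one_mul]
      rw [Complex.norm_exp, Real.rpow_def_of_pos hHp, Complex.re_mul_ofReal, Complex.re_ofReal_mul,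
              mul_comm]
      simp
  let Φ : ℂ → ℂ := fun z => ∑ ε, γ z ε *
    g ε (mul (fun A : Finset (Fin n) => rhoC c z ^ A.card) (φ z) ε)
  have hdiff : Differentiable ℂ Φ := by
    simp only [Φ, γ, φ, mul, coeff, rhoC, x, ← Complex.coe_smul]
    fun_prop
  have hbd : ∃ C : ℝ, ∀ z : ℂ, 0 ≤ z.re → z.re ≤ 1 → ‖Φ z‖ ≤ C := by
    refine ⟨∑ ε, Real.exp (p * |Real.log (H ε)|) *
      (2 ^ n * ∑ δ, Real.exp (p * |Real.log (F δ)|)), ?_⟩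
    intro z h0 h1
    have hxr0 : 0 ≤ (x z).re := by
      rw [hxre]
      have := mul_nonneg (sub_nonneg.2 h1) hx0pos.le
      have := mul_nonneg h0 hqi0.le
      linarith
    have hxr1 : (x z).re ≤ 1 := by
      rw [hxre]
      nlinarith
    refine (norm_sum_le _ _).trans (Finset.sum_le_sum fun ε _ => ?_)
    rw [norm_mul]
    refine mul_le_mul ?_ ?_ (norm_nonneg _) (Real.exp_pos _).le
    · simp only [γ]
      rw [norm_mul, Complex.norm_exp]
      refine (mul_le_mul_of_nonneg_right (hιn ε) (Real.exp_pos _).le).trans ?_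
      rw [one_mul]
      apply Real.exp_le_exp.2
      rw [Complex.re_mul_ofReal, Complex.re_ofReal_mul, mul_assoc]
      refine mul_le_mul_of_nonneg_left ?_ hp0.le
      simp only [Complex.sub_re, Complex.one_re]
      calc (1 - (x z).re) * Real.log (H ε) ≤ (1 - (x z).re) * |Real.log (H ε)| := by
            exact mul_le_mul_of_nonneg_left (le_abs_self _) (by linarith)
        _ ≤ 1 * |Real.log (H ε)| := by gcongr; linarith
        _ = _ := one_mul _
    · refine ((g ε).le_of_opNorm_le (hg1 ε) _).trans ?_
      rw [one_mul]
      apply norm_mul_le'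
      · intro A
        rw [norm_pow]
        apply pow_le_one₀ (norm_nonneg _)
        exact (rhoC_norm_le hc0.le h0 h1).trans (by linarith)
      · intro δ
        have : ‖φ z δ‖ ≤ Real.exp (p * |Real.log (F δ)|) := by
          simp only [φ]
          rw [norm_smul, Complex.norm_exp]
          refine (mul_le_mul_of_nonneg_left (hfn δ) (Real.exp_pos _).le).trans ?_
          rw [mul_one]
          apply Real.exp_le_exp.2
          rw [Complex.re_mul_ofReal, Complex.re_ofReal_mul, mul_assoc]
          refine mul_le_mul_of_nonneg_left ?_ hp0.le
          calc (x z).re * Real.log (F δ) ≤ (x z).re * |Real.log (F δ)| := by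
                gcongr
                exact le_abs_self _
            _ ≤ 1 * |Real.log (F δ)| := by gcongr
            _ = _ := one_mul _
        exact this.trans (Finset.single_le_sum
          (f := fun δ => Real.exp (p * |Real.log (F δ)|)) (fun i _ => (Real.exp_pos _).le)
          (Finset.mem_univ δ))
  have hmain : ‖Φ θ‖ ≤ 2 := by
    refine PhragmenLindelof.vertical_strip (a := 0) (b := 1) hdiff.diffContOnCl ?_ ?_ ?_
      (by simpa using hθ0.le) (by simpa using hθlt.le)
    · obtain ⟨C, hC⟩ := hbd
      refine ⟨0, by positivity, 0, ?_⟩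
      refine Asymptotics.IsBigO.of_bound C ?_
      refine Filter.Eventually.filter_mono inf_le_right ?_
      rw [Filter.eventually_principal]
      intro z hz
      simp only [zero_mul, Real.exp_zero, norm_one, mul_one]
      exact hC z hz.1.le hz.2.le
    · intro z hz
      have hx : (x z).re = x0 := by rw [hxre, hz]; ring
      refine stein_boundary hx0pos hx0lt hp0 F H hF0 hH0 hF hH (φ z) (γ z)
        (fun ε => hx ▸ hφn z ε) (fun ε => hx ▸ hγn z ε) g hg1 _ ?_
      have hn := rhoC_norm_le hc0.le (z := z) (by rw [hz]) (by rw [hz]; norm_num)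
      rw [rhoC_real hz] at hn ⊢
      rw [Complex.norm_real, Real.norm_eq_abs, h6c] at hn
      have hn' := abs_le.1 (hn.trans hr1)
      refine (Bdd_pow_real ?_ hn'.1 hn'.2).mono (by norm_num)
      rw [le_div_iff₀ hx0pos]; linarith
    · intro z hz
      have hx : (x z).re = x1 := by rw [hxre, hz]; ring
      refine stein_boundary hqi0 hqi hp0 F H hF0 hH0 hF hH (φ z) (γ z)
        (fun ε => hx ▸ hφn z ε) (fun ε => hx ▸ hγn z ε) g hg1 _ ?_
      have hn := rhoC_norm_le hc0.le (z := z) (by rw [hz]; norm_num) (by rw [hz])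
      rw [hx1, one_div_one_div]
      exact hB _ (hn.trans h6c.le)
  have hxθ' : x θ = ((1 / p : ℝ) : ℂ) := by
    rw [← hxθ]; simp [x]
  have hφθ : φ θ = fun ε => ((a⁻¹ : ℝ) : ℂ) • f ε := by
    funext ε
    by_cases hfe : f ε = 0
    · simp [φ, hfe]
    · have hFp : 0 < F ε := div_pos (norm_pos_iff.2 hfe) ha'
      have hne : ‖f ε‖ ≠ 0 := norm_ne_zero_iff.2 hfe
      simp only [φ]
      rw [hxθ', smul_smul]
      congr 1
      rw [← Complex.ofReal_mul, ← Complex.ofReal_mul, ← Complex.ofReal_exp, ← Complex.ofReal_mul]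
      congr 1
      rw [mul_one_div_cancel hp0.ne', one_mul, Real.exp_log hFp]
      simp only [hFdef]
      field_simp
  have hΦθ : Φ θ = ((b / a : ℝ) : ℂ) := by
    have : ∀ ε, γ θ ε * g ε (mul (fun A : Finset (Fin n) => rhoC c θ ^ A.card) (φ θ) ε)
        = ((b / a * H ε ^ p : ℝ) : ℂ) := by
      intro ε
      rw [hφθ, mul_const_smul]
      simp only [map_smul]
      rw [← hh, hg2]
      by_cases hhe : h ε = 0
      · simp [γ, ι, hhe, hHdef, Real.zero_rpow hp0.ne']
      · have hHp : 0 < H ε := div_pos (norm_pos_iff.2 hhe) hb'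
        simp only [γ, ι, hhe, if_false, one_mul]
        rw [hxθ']
        have e1 : (p * (1 - ((1 / p : ℝ) : ℂ)) * (Real.log (H ε) : ℝ) : ℂ)
            = ((Real.log (H ε) * (p - 1) : ℝ) : ℂ) := by
          have : (p : ℂ) ≠ 0 := by exact_mod_cast hp0.ne'
          push_cast; field_simp
        rw [e1, ← Complex.ofReal_exp, ← Real.rpow_def_of_pos hHp]
        have e2 : ‖h ε‖ = b * H ε := by simp only [hHdef]; field_simp
        have e3 : H ε ^ p = H ε ^ (p - 1) * H ε := by
          rw [← Real.rpow_add_one hHp.ne']; congr 1; ring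
        rw [e2, e3]
        simp only [smul_eq_mul]
        push_cast
        simp only [Complex.coe_algebraMap]
        ring_nf
    simp only [Φ]
    simp_rw [this]
    rw [← Complex.ofReal_sum, ← Finset.mul_sum, hH, mul_one]
  rw [hΦθ, Complex.norm_real, Real.norm_of_nonneg (by positivity), div_le_iff₀ ha'] at hmain
  exact hmain
/-! ### Polynomials bounded on a rhombus -/

lemma csinh_eq (w : ℂ) : Complex.sinh w =
    (Real.sinh w.re * Real.cos w.im : ℝ) + (Real.cosh w.re * Real.sin w.im : ℝ) * Complex.I := by
  conv_lhs => rw [← Complex.re_add_im w, Complex.sinh_add, Complex.cosh_mul_I, Complex.sinh_mul_I]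
  push_cast; ring

lemma ccosh_eq (w : ℂ) : Complex.cosh w =
    (Real.cosh w.re * Real.cos w.im : ℝ) + (Real.sinh w.re * Real.sin w.im : ℝ) * Complex.I := by
  conv_lhs => rw [← Complex.re_add_im w, Complex.cosh_add, Complex.cosh_mul_I, Complex.sinh_mul_I]
  push_cast; ring

lemma norm_csinh_sq (w : ℂ) : ‖Complex.sinh w‖ ^ 2 = Real.sinh w.re ^ 2 + Real.sin w.im ^ 2 := by
  rw [csinh_eq, ← Complex.normSq_eq_norm_sq, Complex.normSq_add_mul_I]
  have h1 := Real.cosh_sq w.re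
  have h2 := Real.sin_sq_add_cos_sq w.im
  rw [mul_pow, mul_pow, h1]
  linear_combination (Real.sinh w.re ^ 2) * h2

lemma norm_ccosh_sq (w : ℂ) : ‖Complex.cosh w‖ ^ 2 = Real.sinh w.re ^ 2 + Real.cos w.im ^ 2 := by
  rw [ccosh_eq, ← Complex.normSq_eq_norm_sq, Complex.normSq_add_mul_I]
  have h1 := Real.cosh_sq w.re
  have h2 := Real.sin_sq_add_cos_sq w.im
  rw [mul_pow, mul_pow, h1]
  linear_combination (Real.sinh w.re ^ 2) * h2

lemma ccosh_ne_zero {w : ℂ} (h : |w.im| < Real.pi / 2) : Complex.cosh w ≠ 0 := by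
  intro h0
  have h1 := norm_ccosh_sq w
  rw [h0, norm_zero] at h1
  have h2 := abs_lt.1 h
  have h3 := Real.cos_pos_of_mem_Ioo ⟨by linarith [h2.1], h2.2⟩
  nlinarith [sq_nonneg (Real.sinh w.re)]

lemma csinh_ne_zero {w : ℂ} (h : |w.im| < Real.pi) (hw : w ≠ 0) : Complex.sinh w ≠ 0 := by
  intro h0
  have h1 := norm_csinh_sq w
  rw [h0, norm_zero] at h1
  have h2 : Real.sinh w.re ^ 2 = 0 := by
    nlinarith [sq_nonneg (Real.sinh w.re), sq_nonneg (Real.sin w.im)]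
  have h3 : Real.sin w.im ^ 2 = 0 := by
    nlinarith [sq_nonneg (Real.sinh w.re), sq_nonneg (Real.sin w.im)]
  have h4 : w.re = 0 := Real.sinh_eq_zero.1 (pow_eq_zero_iff two_ne_zero |>.1 h2)
  have h5 : Real.sin w.im = 0 := pow_eq_zero_iff two_ne_zero |>.1 h3
  have h6 := abs_lt.1 h
  have h7 : w.im = 0 := (Real.sin_eq_zero_iff_of_lt_of_lt h6.1 h6.2).1 h5
  exact hw (Complex.ext h4 h7)

/-- `sinh w / w` -/
def shc : ℂ → ℂ := dslope Complex.sinh 0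

lemma shc_mul (w : ℂ) : w * shc w = Complex.sinh w := by
  have := sub_smul_dslope Complex.sinh 0 w
  simpa [shc] using this

lemma shc_zero : shc 0 = 1 := by
  simp [shc, dslope_same, Complex.deriv_sinh]

lemma shc_ne_zero {w : ℂ} (h : |w.im| < Real.pi) : shc w ≠ 0 := by
  by_cases hw : w = 0
  · rw [hw, shc_zero]; exact one_ne_zero
  · intro h0
    have := shc_mul w
    rw [h0, mul_zero] at this
    exact csinh_ne_zero h hw this.symm

lemma shc_diff : Differentiable ℂ shc := by
  have h := (Complex.differentiableOn_dslope (s := Set.univ) (c := (0 : ℂ)) (f := Complex.sinh)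
    Filter.univ_mem).2 Complex.differentiable_sinh.differentiableOn
  exact differentiableOn_univ.1 h

lemma coth_rhombus {r ψ : ℝ} (hr : 0 < r) (hψ : Real.sin ψ = r * Real.cos ψ)
    (hψ0 : 0 < Real.sin ψ) (w : ℂ) (hw : 2 * w.im = Real.pi - ψ ∨ 2 * w.im = -(Real.pi - ψ)) :
    |(Complex.cosh w / Complex.sinh w).re| + |(Complex.cosh w / Complex.sinh w).im| / r ≤ 1 := by
  set s := Real.sinh w.re with hs
  set c := Real.cosh w.re with hc
  set S := Real.sin w.im with hS
  set C := Real.cos w.im with hC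
  have hcs : c ^ 2 = s ^ 2 + 1 := Real.cosh_sq _
  have hSC : S ^ 2 + C ^ 2 = 1 := Real.sin_sq_add_cos_sq _
  have hsin : |2 * S * C| = Real.sin ψ := by
    rw [hS, hC, ← Real.sin_two_mul]
    rcases hw with hw | hw
    · rw [hw, Real.sin_pi_sub, abs_of_pos hψ0]
    · rw [hw, Real.sin_neg, Real.sin_pi_sub, abs_neg, abs_of_pos hψ0]
  have hcos : 2 * C ^ 2 - 1 = - Real.cos ψ := by
    rw [hC, ← Real.cos_two_mul]
    rcases hw with hw | hw
    · rw [hw, Real.cos_pi_sub]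
    · rw [hw, Real.cos_neg, Real.cos_pi_sub]
  have hS2 : 0 < S ^ 2 := by
    have : S ≠ 0 := by
      intro h0
      rw [h0] at hsin
      simp at hsin
      linarith
    positivity
  have hD : 0 < s ^ 2 + S ^ 2 := by positivity
  have hsne : Complex.sinh w ≠ 0 := by
    intro h0
    have := norm_csinh_sq w
    rw [h0, norm_zero] at this
    have h3 : s ^ 2 + S ^ 2 = 0 := by rw [hs, hS, ← this]; norm_num
    linarith
  have key : Complex.cosh w / Complex.sinh w
      = ((s * c / (s ^ 2 + S ^ 2) : ℝ) : ℂ) + ((-(S * C) / (s ^ 2 + S ^ 2) : ℝ) : ℂ) * Complex.I := by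
    rw [div_eq_iff hsne, csinh_eq, ccosh_eq]
    rw [← hs, ← hc, ← hS, ← hC]
    have hD' : ((s ^ 2 + S ^ 2 : ℝ) : ℂ) ≠ 0 := by exact_mod_cast hD.ne'
    have hcs' : (c : ℂ) ^ 2 = s ^ 2 + 1 := by exact_mod_cast hcs
    have hSC' : (S : ℂ) ^ 2 + C ^ 2 = 1 := by exact_mod_cast hSC
    have hI := Complex.I_sq
    push_cast at hD' ⊢
    field_simp
    linear_combination (-(s : ℂ) * S * Complex.I) * hcs' + (s : ℂ) * S * Complex.I * hSC' + (S : ℂ) ^ 2 * C * c * hI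
  rw [key]
  simp only [Complex.add_re, Complex.ofReal_re, Complex.mul_re, Complex.I_re, mul_zero,
    Complex.ofReal_im, Complex.I_im, mul_one, sub_self, add_zero, Complex.add_im, Complex.mul_im,
    zero_add]
  rw [abs_div, abs_div, abs_of_pos hD, abs_neg, div_right_comm, ← add_div, div_le_one hD]
  have h1 : |S * C| / r = Real.cos ψ / 2 := by
    have : |2 * S * C| = 2 * |S * C| := by rw [mul_assoc, abs_mul, abs_two]
    rw [this, hψ] at hsin
    rw [div_eq_iff hr.ne']; linarith
  rw [h1]
  have hc0 : 0 < c := Real.cosh_pos _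
  have h2 : |s * c| ≤ s ^ 2 + 1 / 2 := by
    rw [abs_le]
    constructor <;> nlinarith [sq_nonneg (s + c), sq_nonneg (s - c)]
  nlinarith

/-- exponent -/
def alphaOf (r : ℝ) : ℝ := 2 - 2 * Real.arctan r / Real.pi

lemma alphaOf_lt {r : ℝ} (hr : 0 < r) : alphaOf r < 2 := by
  have : 0 < Real.arctan r := Real.arctan_pos.2 hr
  have h : 0 < 2 * Real.arctan r / Real.pi := by positivity
  unfold alphaOf; linarith

lemma one_le_alphaOf (r : ℝ) : 1 ≤ alphaOf r := by
  have : Real.arctan r < Real.pi / 2 := Real.arctan_lt_pi_div_two r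
  have h : 2 * Real.arctan r / Real.pi ≤ 1 := by
    rw [div_le_one Real.pi_pos]; linarith
  unfold alphaOf; linarith

lemma poly_growth {E : Type*} [NormedAddCommGroup E] [NormedSpace ℂ E] {r : ℝ} (hr : 0 < r)
    (d : ℕ) (a : ℕ → E) (M : ℝ)
    (hM : ∀ ρ : ℂ, |ρ.re| + |ρ.im| / r ≤ 1 → ‖∑ k ∈ Finset.range (d + 1), ρ ^ k • a k‖ ≤ M)
    (t : ℝ) (ht : 0 < t) :
    (Real.sinh (t / 2) / Real.cosh (t / 2)) ^ d *
      ‖∑ k ∈ Finset.range (d + 1), ((Real.cosh (alphaOf r * t / 2) /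
        Real.sinh (alphaOf r * t / 2) : ℝ) : ℂ) ^ k • a k‖ ≤ M := by
  set α := alphaOf r with hα
  have hα1 : 1 ≤ α := one_le_alphaOf r
  have hα2 : α < 2 := alphaOf_lt hr
  have hαc : (α : ℂ) ≠ 0 := by
    have : α ≠ 0 := by linarith
    exact_mod_cast this
  have hpi := Real.pi_pos
  set ψ := Real.arctan r with hψdef
  have hαψ : α * Real.pi = 2 * Real.pi - 2 * ψ := by
    rw [hα]; unfold alphaOf; field_simp; ring
  let th : ℂ → ℂ := fun ζ => Complex.sinh (ζ / 2) / Complex.cosh (ζ / 2)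
  let κ : ℂ → ℂ := fun ζ => shc (ζ / 2) * Complex.cosh (α * ζ / 2) /
    (α * (Complex.cosh (ζ / 2) * shc (α * ζ / 2)))
  let G : ℂ → E := fun ζ => ∑ k ∈ Finset.range (d + 1), (κ ζ ^ k * th ζ ^ (d - k)) • a k
  have im1 : ∀ ζ : ℂ, (ζ / 2).im = ζ.im / 2 := fun ζ => by simp
  have im2 : ∀ ζ : ℂ, (α * ζ / 2).im = α * ζ.im / 2 := fun ζ => by
    simp
  have re2 : ∀ ζ : ℂ, (α * ζ / 2).re = α * ζ.re / 2 := fun ζ => by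
    simp
  have hc1 : ∀ ζ : ℂ, |ζ.im| ≤ Real.pi / 2 → Complex.cosh (ζ / 2) ≠ 0 := by
    intro ζ h
    apply ccosh_ne_zero
    rw [im1, abs_div, abs_two]; linarith
  have him : ∀ ζ : ℂ, |ζ.im| ≤ Real.pi / 2 → |(α * ζ / 2).im| < Real.pi := by
    intro ζ h
    rw [im2, abs_div, abs_two, abs_mul, abs_of_pos (by linarith : 0 < α)]
    nlinarith [abs_nonneg ζ.im]
  have hs1 : ∀ ζ : ℂ, |ζ.im| ≤ Real.pi / 2 → shc (α * ζ / 2) ≠ 0 :=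
    fun ζ h => shc_ne_zero (him ζ h)
  have hκ : ∀ ζ : ℂ, |ζ.im| ≤ Real.pi / 2 → ζ ≠ 0 →
      κ ζ = th ζ * (Complex.cosh (α * ζ / 2) / Complex.sinh (α * ζ / 2)) := by
    intro ζ h h0
    have e1 := hc1 ζ h
    have e2 := hs1 ζ h
    simp only [κ, th]
    rw [← shc_mul (ζ / 2), ← shc_mul (α * ζ / 2)]
    field_simp
  have hG : ∀ ζ : ℂ, |ζ.im| ≤ Real.pi / 2 → ζ ≠ 0 →
      G ζ = th ζ ^ d • ∑ k ∈ Finset.range (d + 1),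
        (Complex.cosh (α * ζ / 2) / Complex.sinh (α * ζ / 2)) ^ k • a k := by
    intro ζ h h0
    simp only [G]
    rw [Finset.smul_sum]
    refine Finset.sum_congr rfl fun k hk => ?_
    have hk' : k ≤ d := by simpa [Nat.lt_succ_iff] using hk
    rw [hκ ζ h h0, smul_smul, mul_pow]
    congr 1
    rw [mul_right_comm, ← pow_add, Nat.add_sub_cancel' hk']
  have habs : ∀ ζ : ℂ, ζ.im ∈ Set.Icc (-(Real.pi / 2)) (Real.pi / 2) → |ζ.im| ≤ Real.pi / 2 :=
    fun ζ h => abs_le.2 h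
  have hcl : closure (Complex.im ⁻¹' Set.Ioo (-(Real.pi / 2)) (Real.pi / 2))
      ⊆ Complex.im ⁻¹' Set.Icc (-(Real.pi / 2)) (Real.pi / 2) :=
    closure_minimal (Set.preimage_mono Set.Ioo_subset_Icc_self)
      (isClosed_Icc.preimage Complex.continuous_im)
  have hdiff : DiffContOnCl ℂ G (Complex.im ⁻¹' Set.Ioo (-(Real.pi / 2)) (Real.pi / 2)) := by
    apply DifferentiableOn.diffContOnCl
    intro ζ hζ
    have h := habs ζ (hcl hζ)
    have e1 := hc1 ζ h
    have e2 := hs1 ζ h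
    apply DifferentiableAt.differentiableWithinAt
    have d1 : DifferentiableAt ℂ (fun ζ : ℂ => shc (ζ / 2)) ζ :=
      (shc_diff _).comp ζ (by fun_prop)
    have d2 : DifferentiableAt ℂ (fun ζ : ℂ => shc (α * ζ / 2)) ζ :=
      DifferentiableAt.comp ζ (f := fun ζ : ℂ => (α * ζ / 2 : ℂ)) (shc_diff _) (by fun_prop)
    have dκ : DifferentiableAt ℂ κ ζ := by
      simp only [κ]
      refine DifferentiableAt.div ?_ ?_ (mul_ne_zero hαc (mul_ne_zero e1 e2))
      · exact d1.mul (by fun_prop)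
      · exact (DifferentiableAt.mul (by fun_prop) d2).const_mul _
    have dth : DifferentiableAt ℂ th ζ := by
      simp only [th]
      exact DifferentiableAt.div (by fun_prop) (by fun_prop) e1
    simp only [G]
    fun_prop
  have hmain : ‖G t‖ ≤ M := by
    refine PhragmenLindelof.horizontal_strip (a := -(Real.pi / 2)) (b := Real.pi / 2) hdiff
      ?_ ?_ ?_ (by simp; linarith) (by simp; linarith)
    · refine ⟨0, by rw [show Real.pi / 2 - -(Real.pi / 2) = Real.pi by ring]; positivity, 0, ?_⟩
      refine Asymptotics.IsBigO.of_bound (∑ k ∈ Finset.range (d + 1), 3 ^ k * ‖a k‖) ?_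
      simp only [zero_mul, Real.exp_zero, norm_one, mul_one]
      rw [Filter.eventually_inf_principal]
      have hev := (Filter.eventually_ge_atTop (1 : ℝ)).comap (abs ∘ Complex.re)
      filter_upwards [hev] with ζ h1 hζ
      simp only [Function.comp] at h1
      have h := habs ζ (Set.Ioo_subset_Icc_self hζ)
      have h0 : ζ ≠ 0 := by
        rintro rfl
        simp at h1
        linarith
      have hth : ‖th ζ‖ ≤ 1 := by
        simp only [th]
        rw [norm_div, div_le_one (norm_pos_iff.2 (hc1 ζ h))]
        apply le_of_sq_le_sq _ (norm_nonneg _)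
        rw [norm_csinh_sq, norm_ccosh_sq, im1]
        have h2 := abs_le.1 h
        have : 0 ≤ Real.cos (2 * (ζ.im / 2)) := by
          apply Real.cos_nonneg_of_mem_Icc
          constructor <;> linarith [h2.1, h2.2]
        rw [Real.cos_two_mul] at this
        have h3 := Real.sin_sq_add_cos_sq (ζ.im / 2)
        linarith
      have hco : ‖Complex.cosh (α * ζ / 2) / Complex.sinh (α * ζ / 2)‖ ≤ 3 := by
        have hne : Complex.sinh (α * ζ / 2) ≠ 0 := csinh_ne_zero (him ζ h)
          (div_ne_zero (mul_ne_zero hαc h0) two_ne_zero)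
        rw [norm_div, div_le_iff₀ (norm_pos_iff.2 hne)]
        apply le_of_sq_le_sq _ (by positivity)
        rw [mul_pow, norm_csinh_sq, norm_ccosh_sq, re2]
        have h4 : 1 / 2 ≤ |α * ζ.re / 2| := by
          rw [abs_div, abs_two, abs_mul, abs_of_pos (by linarith : 0 < α)]
          nlinarith
        have h5 : |α * ζ.re / 2| ≤ |Real.sinh (α * ζ.re / 2)| := by
          rw [Real.abs_sinh]
          exact Real.self_le_sinh_iff.2 (abs_nonneg _)
        have h6 : (1 / 2 : ℝ) ^ 2 ≤ Real.sinh (α * ζ.re / 2) ^ 2 := by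
          rw [← sq_abs (Real.sinh _)]
          exact pow_le_pow_left₀ (by norm_num) (h4.trans h5) 2
        have h7 := Real.cos_sq_le_one (α * ζ / 2 : ℂ).im
        nlinarith [sq_nonneg (Real.sin (α * ζ / 2 : ℂ).im)]
      have hκn : ‖κ ζ‖ ≤ 3 := by
        rw [hκ ζ h h0, norm_mul]
        calc _ ≤ 1 * (3 : ℝ) := by gcongr
          _ = 3 := one_mul _
      refine (norm_sum_le _ _).trans (Finset.sum_le_sum fun k _ => ?_)
      rw [norm_smul, norm_mul, norm_pow, norm_pow]
      have : ‖κ ζ‖ ^ k * ‖th ζ‖ ^ (d - k) ≤ 3 ^ k * 1 := by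
        gcongr
        exact pow_le_one₀ (norm_nonneg _) hth
      rw [mul_one] at this
      gcongr
    all_goals
      intro ζ hζ
      have hab : |ζ.im| = Real.pi / 2 := by
        rw [hζ]; simp; try positivity
      have h0 : ζ ≠ 0 := by
        rintro rfl
        simp at hab
        linarith
      rw [hG ζ hab.le h0, norm_smul, norm_pow]
      have hth : ‖th ζ‖ = 1 := by
        simp only [th]
        rw [norm_div, div_eq_one_iff_eq (norm_ne_zero_iff.2 (hc1 ζ hab.le))]
        apply (sq_eq_sq₀ (norm_nonneg _) (norm_nonneg _)).1
        rw [norm_csinh_sq, norm_ccosh_sq, im1]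
        have : Real.cos (2 * (ζ.im / 2)) = 0 := by
          rw [mul_div_cancel₀ _ (two_ne_zero), ← Real.cos_abs, hab, Real.cos_pi_div_two]
        rw [Real.cos_two_mul] at this
        have h3 := Real.sin_sq_add_cos_sq (ζ.im / 2)
        linarith
      rw [hth, one_pow, one_mul]
      apply hM
      refine coth_rhombus hr (ψ := ψ) ?_ ?_ _ ?_
      · rw [← Real.tan_arctan r, ← hψdef, Real.tan_mul_cos]
        exact (Real.cos_arctan_pos r).ne'
      · apply Real.sin_pos_of_pos_of_lt_pi (Real.arctan_pos.2 hr)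
        have := Real.arctan_lt_pi_div_two r
        linarith
      · rw [im2, hζ]
        first
        | left; linarith
        | right; linarith
  rw [hG t (by simp; positivity) (by exact_mod_cast ht.ne'), norm_smul, norm_pow] at hmain
  have e1 : ‖th t‖ = Real.sinh (t / 2) / Real.cosh (t / 2) := by
    simp only [th]
    have h1 : Complex.sinh ((t : ℂ) / 2) = ((Real.sinh (t / 2) : ℝ) : ℂ) := by push_cast; rfl
    have h2 : Complex.cosh ((t : ℂ) / 2) = ((Real.cosh (t / 2) : ℝ) : ℂ) := by push_cast; rfl
    rw [h1, h2, ← Complex.ofReal_div, Complex.norm_real, Real.norm_of_nonneg]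
    exact div_nonneg (Real.sinh_nonneg_iff.2 (by linarith)) (Real.cosh_pos _).le
  rw [e1] at hmain
  convert hmain using 5
  push_cast
  rfl

lemma poly_growth_final {r : ℝ} (hr : 0 < r) (d : ℕ) (hd : 1 ≤ d) :
    ∃ z : ℝ, 1 < z ∧ 1 / (z - 1) ≤ 2 * (d : ℝ) ^ (alphaOf r) ∧
      ∀ {E : Type u} [NormedAddCommGroup E] [NormedSpace ℂ E] (a : ℕ → E) (M : ℝ),
        (∀ ρ : ℂ, |ρ.re| + |ρ.im| / r ≤ 1 → ‖∑ k ∈ Finset.range (d + 1), ρ ^ k • a k‖ ≤ M) →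
        ‖∑ k ∈ Finset.range (d + 1), (z : ℂ) ^ k • a k‖ ≤ 9 * M := by
  set α := alphaOf r with hα
  have hα1 : 1 ≤ α := one_le_alphaOf r
  have hα2 : α < 2 := alphaOf_lt hr
  have hd' : (1 : ℝ) ≤ d := by exact_mod_cast hd
  have hd0 : (0 : ℝ) < d := by linarith
  set t := Real.log (2 * d) with ht
  have ht0 : 0 < t := Real.log_pos (by linarith)
  have key : ∀ s : ℝ, 0 < s → Real.cosh (s / 2) / Real.sinh (s / 2)
      = (Real.exp s + 1) / (Real.exp s - 1) := by
    intro s hs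
    have h1 : Real.exp s = Real.exp (s / 2) ^ 2 := by
      rw [← Real.exp_nat_mul]; congr 1; push_cast; ring
    have h2 : 1 < Real.exp (s / 2) := Real.one_lt_exp_iff.2 (by linarith)
    have h3 : Real.sinh (s / 2) ≠ 0 := (Real.sinh_pos_iff.2 (by linarith)).ne'
    have h4 : Real.exp (s / 2) ^ 2 - 1 ≠ 0 := by nlinarith
    rw [h1, div_eq_div_iff h3 h4, Real.cosh_eq, Real.sinh_eq, Real.exp_neg]
    field_simp
  have hexp : 1 < Real.exp (α * t) := Real.one_lt_exp_iff.2 (by positivity)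
  refine ⟨Real.cosh (α * t / 2) / Real.sinh (α * t / 2), ?_, ?_, ?_⟩
  · rw [key _ (by positivity), lt_div_iff₀ (by linarith)]; linarith
  · rw [key _ (by positivity)]
    have h1 : (Real.exp (α * t) + 1) / (Real.exp (α * t) - 1) - 1 = 2 / (Real.exp (α * t) - 1) := by
      have : Real.exp (α * t) - 1 ≠ 0 := by linarith
      field_simp; ring
    rw [h1, one_div_div]
    have h2 : Real.exp (α * t) = 2 ^ α * (d : ℝ) ^ α := by
      rw [← Real.mul_rpow (by norm_num) hd0.le, Real.rpow_def_of_pos (by positivity), mul_comm]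
    have h3 : (2 : ℝ) ^ α ≤ 4 := by
      calc (2 : ℝ) ^ α ≤ 2 ^ (2 : ℝ) := Real.rpow_le_rpow_of_exponent_le (by norm_num) hα2.le
        _ = 4 := by norm_num
    have h4 : 0 < (d : ℝ) ^ α := by positivity
    rw [h2, div_le_iff₀ (by norm_num)]
    nlinarith
  · intro E _ _ a M hM
    have h := poly_growth hr d a M hM t ht0
    rw [← hα] at h
    set Z := ‖∑ k ∈ Finset.range (d + 1), ((Real.cosh (α * t / 2) /
        Real.sinh (α * t / 2) : ℝ) : ℂ) ^ k • a k‖ with hZ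
    have hth : 0 < Real.sinh (t / 2) / Real.cosh (t / 2) :=
      div_pos (Real.sinh_pos_iff.2 (by linarith)) (Real.cosh_pos _)
    have hM' : Z ≤ ((Real.sinh (t / 2) / Real.cosh (t / 2)) ^ d)⁻¹ * M := by
      rw [inv_mul_eq_div, le_div_iff₀ (by positivity), mul_comm]; exact h
    have hM0 : 0 ≤ M := le_trans (by positivity) h
    refine hM'.trans (mul_le_mul_of_nonneg_right ?_ hM0)
    rw [← inv_pow, inv_div, key t ht0, ht, Real.exp_log (by linarith)]
    have h5 : (2 * (d : ℝ) + 1) / (2 * d - 1) ≤ Real.exp (2 / d) := by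
      refine le_trans ?_ (Real.add_one_le_exp _)
      rw [div_le_iff₀ (by linarith)]
      have : (2 / (d : ℝ) + 1) * (2 * d - 1) = 2 * d + 1 + 2 * (1 - 1 / d) := by field_simp; ring
      rw [this]
      have : 1 / (d : ℝ) ≤ 1 := by rw [div_le_one hd0]; exact hd'
      linarith
    calc ((2 * (d : ℝ) + 1) / (2 * d - 1)) ^ d ≤ Real.exp (2 / d) ^ d := by
          gcongr
          exact div_nonneg (by linarith) (by linarith)
      _ = Real.exp 1 ^ 2 := by
          rw [← Real.exp_nat_mul, ← Real.exp_nat_mul]; congr 1; push_cast; field_simp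
      _ ≤ 3 ^ 2 := by
          have := Real.exp_one_lt_d9
          have h3 := Real.exp_pos 1
          gcongr; linarith
      _ = 9 := by norm_num

lemma sum_slices {n d : ℕ} {f : (Fin n → Bool) → X} (hf : degLE f d) (ρ : ℂ) (ε : Fin n → Bool) :
    ∑ k ∈ Finset.range (d + 1), ρ ^ k • mul (fun A => if A.card = k then 1 else 0) f ε
      = mul (fun A => ρ ^ A.card) f ε := by
  simp only [mul, Finset.smul_sum]
  rw [Finset.sum_comm]
  refine Finset.sum_congr rfl fun A _ => ?_
  by_cases h : d < A.card
  · simp [hf A h]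
  · rw [Finset.sum_eq_single A.card]
    · rw [if_pos rfl, one_mul, smul_smul]
    · intro k _ hk
      simp [hk.symm]
    · intro hk
      exact absurd (Finset.mem_range.2 (by omega)) hk

/-- slices as vectors in the `ℓ_p` space -/
def slice {n : ℕ} (p : ℝ) (f : (Fin n → Bool) → X) (k : ℕ) :
    PiLp (ENNReal.ofReal p) (fun _ : Fin n → Bool => X) :=
  WithLp.toLp _ (mul (fun A => if A.card = k then 1 else 0) f)

lemma sum_slice_eq {n d : ℕ} {p : ℝ} {f : (Fin n → Bool) → X} (hf : degLE f d)
    (ρ : ℂ) : ∑ k ∈ Finset.range (d + 1), ρ ^ k • slice p f k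
      = WithLp.toLp (ENNReal.ofReal p) (mul (fun A => ρ ^ A.card) f) := by
  ext ε
  change _ = mul (fun A => ρ ^ A.card) f ε
  rw [← sum_slices hf]
  simp [slice]

lemma norm_sum_slice {n d : ℕ} {p : ℝ} (hp : 1 ≤ p) [Fact (1 ≤ ENNReal.ofReal p)]
    {f : (Fin n → Bool) → X} (hf : degLE f d) (ρ : ℂ) :
    ‖∑ k ∈ Finset.range (d + 1), ρ ^ k • slice p f k‖ = N p (mul (fun A => ρ ^ A.card) f) := by
  rw [sum_slice_eq hf, N_eq hp]

lemma growth_mul {n : ℕ} {p r M : ℝ} (hp : 1 ≤ p) (hr : 0 < r) {d : ℕ} (hd : 1 ≤ d) :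
    ∃ z : ℝ, 1 < z ∧ 1 / (z - 1) ≤ 2 * (d : ℝ) ^ (alphaOf r) ∧
    ((∀ ρ : ℂ, |ρ.re| + |ρ.im| / r ≤ 1 → Bdd X p (fun A : Finset (Fin n) => ρ ^ A.card) M) →
      ∀ f : (Fin n → Bool) → X, degLE f d →
        N p (mul (fun A => (z : ℂ) ^ A.card) f) ≤ 9 * M * N p f) := by
  obtain ⟨z, hz, hz2, h⟩ := poly_growth_final hr d hd
  refine ⟨z, hz, hz2, fun hB f hf => ?_⟩
  have := fact_p hp
  have h1 := h (slice p f) (M * N p f) (by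
    intro ρ hρ
    rw [norm_sum_slice hp hf]
    exact hB ρ hρ f)
  rw [norm_sum_slice hp hf] at h1
  linarith

lemma Bdd_rad {n : ℕ} {p r M : ℝ} (hp : 1 ≤ p) (hr : 0 < r) (hr1 : r ≤ 1)
    (hB : ∀ ρ : ℂ, |ρ.re| + |ρ.im| / r ≤ 1 → Bdd X p (fun A : Finset (Fin n) => ρ ^ A.card) M) :
    Bdd X p (fun A : Finset (Fin n) => if A.card = 1 then 1 else 0) (M / (r / 2)) := by
  intro f
  have := fact_p hp
  have hf : degLE f (n + 1) := by
    intro A hA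
    have := A.card_le_univ
    simp at this
    omega
  set F : ℂ → PiLp (ENNReal.ofReal p) (fun _ : Fin n → Bool => X) :=
    fun ρ => ∑ k ∈ Finset.range (n + 1 + 1), ρ ^ k • slice p f k with hF
  have hdiff : Differentiable ℂ F := by
    rw [hF]; fun_prop
  have hder : deriv F 0 = slice p f 1 := by
    have h1 : HasDerivAt F (∑ k ∈ Finset.range (n + 1 + 1),
        ((k : ℂ) * (0 : ℂ) ^ (k - 1)) • slice p f k) 0 := by
      apply HasDerivAt.fun_sum
      intro k _
      exact (hasDerivAt_pow k (0 : ℂ)).smul_const _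
    rw [h1.deriv, Finset.sum_eq_single 1]
    · simp
    · intro k _ hk
      rcases k with _ | _ | k
      · simp
      · exact absurd rfl hk
      · simp
    · intro h
      exact absurd (Finset.mem_range.2 (by omega)) h
  have hc := Complex.norm_deriv_le_of_forall_mem_sphere_norm_le (c := (0 : ℂ)) (R := r / 2)
    (C := M * N p f) (F := PiLp (ENNReal.ofReal p) (fun _ : Fin n → Bool => X)) (f := F) (by positivity) hdiff.diffContOnCl (by
      intro ρ hρ
      rw [mem_sphere_zero_iff_norm] at hρ
      rw [hF]
      simp only
      rw [norm_sum_slice hp hf]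
      apply hB
      have h1 := Complex.abs_re_le_norm ρ
      have h2 := Complex.abs_im_le_norm ρ
      have h3 : |ρ.im| / r ≤ 1 / 2 := by
        rw [div_le_iff₀ hr]; linarith
      linarith)
  rw [hder] at hc
  have e : ‖slice p f 1‖ = N p (mul (fun A : Finset (Fin n) => if A.card = 1 then 1 else 0) f) := by
    rw [N_eq hp]; rfl
  rw [e] at hc
  rw [div_mul_eq_mul_div]
  exact hc

lemma walsh_update {n : ℕ} (A : Finset (Fin n)) (ε : Fin n → Bool) (i : Fin n) :
    walsh A (Function.update ε i (!(ε i))) = (if i ∈ A then -1 else 1) * walsh A ε := by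
  have h0 : ∀ b : Bool, sgn (!b) = - sgn b := by intro b; cases b <;> simp [sgn]
  have hne : ∀ (B : Finset (Fin n)), i ∉ B → walsh B (Function.update ε i (!(ε i))) = walsh B ε := by
    intro B hB
    refine Finset.prod_congr rfl fun j hj => ?_
    rw [Function.update_of_ne]
    rintro rfl; exact hB hj
  split_ifs with h
  · rw [← Finset.insert_erase h]
    have h1 := hne (A.erase i) (Finset.notMem_erase i A)
    unfold walsh at h1 ⊢
    rw [Finset.prod_insert (Finset.notMem_erase i A), Finset.prod_insert (Finset.notMem_erase i A), h1]
    simp [h0]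
  · rw [hne A h, one_mul]

lemma pderiv_eq {n : ℕ} (i : Fin n) (f : (Fin n → Bool) → X) :
    pderiv i f = mul (fun A => if i ∈ A then 1 else 0) f := by
  funext ε
  unfold pderiv
  nth_rewrite 1 [← walsh_inversion f ε]
  rw [← walsh_inversion f (Function.update ε i (!(ε i))), ← Finset.sum_sub_distrib,
    Finset.smul_sum]
  refine Finset.sum_congr rfl fun A _ => ?_
  rw [walsh_update, ← sub_smul, smul_smul]
  by_cases h : i ∈ A
  · simp only [h, if_true, one_mul, Complex.coe_smul]; congr 1; ring
  · simp [h]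

/-- the multiplier of `∑ δ_i ∂_i` -/
def mD {n : ℕ} (δ : Fin n → Bool) (A : Finset (Fin n)) : ℝ := ∑ i ∈ A, sgn (δ i)

lemma sum_pderiv_eq {n : ℕ} (δ : Fin n → Bool) (f : (Fin n → Bool) → X) :
    (fun ε => ∑ i : Fin n, sgn (δ i) • pderiv i f ε) = mul (fun A => (mD δ A : ℂ)) f := by
  have h := mul_sum_mult Finset.univ (fun i : Fin n => (sgn (δ i) : ℂ))
    (fun i A => if i ∈ A then 1 else 0) f
  have e : (fun A : Finset (Fin n) => (mD δ A : ℂ))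
      = fun A => ∑ i, (sgn (δ i) : ℂ) * (if i ∈ A then 1 else 0) := by
    funext A
    simp [mD]
  rw [e, h]
  funext ε
  refine Finset.sum_congr rfl fun i _ => ?_
  rw [pderiv_eq, Complex.coe_smul]

/-- coordinatewise product on the cube -/
def tw {n : ℕ} (δ ε : Fin n → Bool) : Fin n → Bool := fun i => δ i == ε i

lemma sgn_tw {n : ℕ} (δ ε : Fin n → Bool) (i : Fin n) : sgn (tw δ ε i) = sgn (δ i) * sgn (ε i) := by
  unfold tw
  cases δ i <;> cases ε i <;> simp [sgn]

lemma sum_tw {n : ℕ} (ε : Fin n → Bool) (Φ : (Fin n → Bool) → ℝ) :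
    ∑ δ, Φ (tw δ ε) = ∑ δ, Φ δ := by
  let e : Equiv.Perm (Fin n → Bool) := Function.Involutive.toPerm (fun δ => tw δ ε) (by
    intro δ; funext i; simp only [tw]; cases δ i <;> cases ε i <;> rfl)
  exact Equiv.sum_comp e Φ

lemma walsh_single_mix {n : ℕ} (A B : Finset (Fin n)) (δ ε : Fin n → Bool) :
    (if (A ∩ B).card = 1 then (1 : ℝ) else 0) * walsh A (mix B δ ε)
      = ∑ i ∈ A, (if A ∩ B = {i} then 1 else 0) * (sgn (tw δ ε i) * walsh A ε) := by
  split_ifs with h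
  · obtain ⟨j, hj⟩ := Finset.card_eq_one.1 h
    have hjA : j ∈ A := (Finset.mem_inter.1 (hj ▸ Finset.mem_singleton_self j : j ∈ A ∩ B)).1
    rw [Finset.sum_eq_single j]
    · have h2 : walsh A ε = walsh (A ∩ B) ε * walsh (A \ B) ε := by
        rw [← walsh_mix]; congr 1; funext i; simp [mix]
      rw [walsh_mix, h2, hj, sgn_tw]
      simp only [walsh, Finset.prod_singleton, if_true]
      linear_combination (-(sgn (δ j) * ∏ i ∈ A \ B, sgn (ε i))) * sgn_mul_self (ε j)
    · intro i _ hi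
      rw [hj, if_neg, zero_mul]
      intro h'; exact hi (Finset.singleton_injective h').symm
    · exact fun h' => absurd hjA h'
  · rw [zero_mul, Finset.sum_eq_zero]
    intro i _
    rw [if_neg, zero_mul]
    intro h'; exact h (by rw [h']; simp)

lemma key_coeff {n : ℕ} (s : ℝ) (A : Finset (Fin n)) (δ ε : Fin n → Bool) :
    s * ∑ B : Finset (Fin n), W (1 - s) B *
        ((if (A ∩ B).card = 1 then (1 : ℝ) else 0) * walsh A (mix B δ ε))
      = (1 - s) * (mD (tw δ ε) A * s ^ A.card * walsh A ε) := by
  simp_rw [walsh_single_mix, Finset.mul_sum]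
  rw [Finset.sum_comm]
  unfold mD
  simp_rw [Finset.sum_mul, Finset.mul_sum]
  refine Finset.sum_congr rfl fun i hi => ?_
  have h := sum_W_single (1 - s) A i hi
  have h2 : s ^ A.card = s * s ^ (A.card - 1) := by
    rw [← pow_succ', Nat.sub_add_cancel (Finset.card_pos.2 ⟨i, hi⟩)]
  rw [sub_sub_cancel] at h
  calc _ = s * (∑ B : Finset (Fin n), W (1 - s) B * (if A ∩ B = {i} then 1 else 0))
        * (sgn (tw δ ε i) * walsh A ε) := by
        rw [Finset.mul_sum, Finset.sum_mul]
        exact Finset.sum_congr rfl fun B _ => by ring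
    _ = _ := by rw [h, h2]; ring

lemma key_identity {n : ℕ} (s : ℝ) (f : (Fin n → Bool) → X) (δ ε : Fin n → Bool) :
    (s : ℂ) • ∑ B : Finset (Fin n), (W (1 - s) B : ℂ) •
        mul (fun A => if (A ∩ B).card = 1 then 1 else 0) f (mix B δ ε)
      = ((1 - s : ℝ) : ℂ) • mul (fun A => (mD (tw δ ε) A : ℂ) * (s : ℂ) ^ A.card) f ε := by
  simp only [mul, Finset.smul_sum]
  rw [Finset.sum_comm]
  refine Finset.sum_congr rfl fun A _ => ?_
  simp only [smul_smul]
  rw [← Finset.sum_smul]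
  congr 1
  have h := congrArg (fun x : ℝ => (x : ℂ)) (key_coeff s A δ ε)
  push_cast at h ⊢
  rw [Finset.mul_sum] at h
  convert h using 1
  refine Finset.sum_congr rfl fun B _ => ?_
  split_ifs <;> simp

lemma pair_bound {n : ℕ} {p K s : ℝ} (hp : 1 ≤ p) (hK : 0 ≤ K) (hs : 0 ≤ s) (hs1 : s ≤ 1)
    (hR : Bdd X p (fun A : Finset (Fin n) => if A.card = 1 then 1 else 0) K)
    (f : (Fin n → Bool) → X) :
    (1 - s) * N p (fun x : (Fin n → Bool) × (Fin n → Bool) =>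
        mul (fun A => (mD x.2 A : ℂ) * (s : ℂ) ^ A.card) f x.1)
      ≤ s * (K * (((2 : ℝ) ^ n) ^ (1 / p) * N p f)) := by
  have e1 : N p (fun x : (Fin n → Bool) × (Fin n → Bool) =>
        mul (fun A => (mD x.2 A : ℂ) * (s : ℂ) ^ A.card) f x.1)
      = N p (fun x : (Fin n → Bool) × (Fin n → Bool) =>
        mul (fun A => (mD (tw x.2 x.1) A : ℂ) * (s : ℂ) ^ A.card) f x.1) := by
    unfold N
    congr 1
    rw [Fintype.sum_prod_type, Fintype.sum_prod_type]
    refine Finset.sum_congr rfl fun ε _ => ?_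
    exact (sum_tw ε (fun δ => ‖mul (fun A => (mD δ A : ℂ) * (s : ℂ) ^ A.card) f ε‖ ^ p)).symm
  have e2 : (1 - s) * N p (fun x : (Fin n → Bool) × (Fin n → Bool) =>
        mul (fun A => (mD (tw x.2 x.1) A : ℂ) * (s : ℂ) ^ A.card) f x.1)
      = s * N p (fun x : (Fin n → Bool) × (Fin n → Bool) => ∑ B : Finset (Fin n),
        (W (1 - s) B : ℂ) •
        mul (fun A => if (A ∩ B).card = 1 then 1 else 0) f (mix B x.2 x.1)) := by
    have h1 := N_smul hp ((1 - s : ℝ) : ℂ) (fun x : (Fin n → Bool) × (Fin n → Bool) =>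
        mul (fun A => (mD (tw x.2 x.1) A : ℂ) * (s : ℂ) ^ A.card) f x.1)
    have h2 := N_smul hp (s : ℂ) (fun x : (Fin n → Bool) × (Fin n → Bool) =>
      ∑ B : Finset (Fin n), (W (1 - s) B : ℂ) •
        mul (fun A => if (A ∩ B).card = 1 then 1 else 0) f (mix B x.2 x.1))
    rw [Complex.norm_real, Real.norm_of_nonneg (by linarith)] at h1
    rw [Complex.norm_real, Real.norm_of_nonneg hs] at h2
    rw [← h1, ← h2]
    congr 1
    funext x
    exact (key_identity s f x.2 x.1).symm
  rw [e1, e2]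
  refine mul_le_mul_of_nonneg_left ?_ hs
  refine (N_sum_le hp Finset.univ (fun (B : Finset (Fin n))
    (x : (Fin n → Bool) × (Fin n → Bool)) => (W (1 - s) B : ℂ) •
        mul (fun A => if (A ∩ B).card = 1 then 1 else 0) f (mix B x.2 x.1))).trans ?_
  have hW := sum_W (n := n) (1 - s)
  calc _ ≤ ∑ B : Finset (Fin n), W (1 - s) B * (K * (((2 : ℝ) ^ n) ^ (1 / p) * N p f)) := by
        refine Finset.sum_le_sum fun B _ => ?_
        have hWB := W_nonneg (l := 1 - s) (by linarith) (by linarith) B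
        rw [N_smul hp, Complex.norm_real, Real.norm_of_nonneg hWB]
        refine mul_le_mul_of_nonneg_left ?_ hWB
        have hb := hR.restrict hp hK B f
        have : N p (fun x : (Fin n → Bool) × (Fin n → Bool) =>
            mul (fun A => if (A ∩ B).card = 1 then 1 else 0) f (mix B x.2 x.1))
            = ((2 : ℝ) ^ n) ^ (1 / p) * N p (mul (fun A => if (A ∩ B).card = 1 then 1 else 0) f) := by
          unfold N
          rw [← Real.mul_rpow (by positivity) (by positivity), Fintype.sum_prod_type]
          congr 1
          exact sum_mix B (fun ε => ‖mul (fun A => if (A ∩ B).card = 1 then 1 else 0) f ε‖ ^ p)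
        rw [this, mul_left_comm]
        exact mul_le_mul_of_nonneg_left hb (by positivity)
    _ = _ := by rw [← Finset.sum_mul, hW, one_mul]

lemma final_bound {n d : ℕ} {p r : ℝ} (hp : 1 ≤ p) (hr : 0 < r) (hr1 : r ≤ 1) (hd : 1 ≤ d)
    (hI : Bdd X p (fun A : Finset (Fin n) => (Complex.I * r) ^ A.card) 2)
    (f : (Fin n → Bool) → X) (hf : degLE f d) :
    N p (fun x : (Fin n → Bool) × (Fin n → Bool) => mul (fun A => (mD x.2 A : ℂ)) f x.1)
      ≤ (576 / r * (d : ℝ) ^ (alphaOf r)) * (((2 : ℝ) ^ n) ^ (1 / p) * N p f) := by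
  have hB : ∀ ρ : ℂ, |ρ.re| + |ρ.im| / r ≤ 1 →
      Bdd X p (fun A : Finset (Fin n) => ρ ^ A.card) (2 ^ 2) :=
    fun ρ hρ => Bdd_rhombus hp hr (by norm_num) hI hρ
  have hR := Bdd_rad hp hr hr1 hB
  obtain ⟨z, hz, hz2, hg⟩ := growth_mul (X := X) (n := n) (M := 2 ^ 2) hp hr hd
  have hz0 : 0 < z := by linarith
  have hg := hg hB
  have hs1 : z⁻¹ ≤ 1 := inv_le_one_of_one_le₀ hz.le
  have hpair := pair_bound (s := z⁻¹) hp (by positivity) (by positivity) hs1 hR f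
  have h1 : N p (fun x : (Fin n → Bool) × (Fin n → Bool) => mul (fun A => (mD x.2 A : ℂ)) f x.1)
      ≤ (9 * 2 ^ 2) * N p (fun x : (Fin n → Bool) × (Fin n → Bool) =>
        mul (fun A => (mD x.2 A : ℂ) * ((z⁻¹ : ℝ) : ℂ) ^ A.card) f x.1) := by
    rw [N_le_iff hp (by norm_num), Fintype.sum_prod_type_right, Fintype.sum_prod_type_right,
      Finset.mul_sum]
    refine Finset.sum_le_sum fun δ _ => ?_
    rw [← N_le_iff hp (by norm_num)]
    have h := hg (mul (fun A => (mD δ A : ℂ) * ((z⁻¹ : ℝ) : ℂ) ^ A.card) f) (by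
      intro A hA
      rw [coeff_mul, hf A hA, smul_zero])
    rw [mul_mul] at h
    have e : (fun A : Finset (Fin n) => (z : ℂ) ^ A.card *
        ((mD δ A : ℂ) * ((z⁻¹ : ℝ) : ℂ) ^ A.card)) = fun A => (mD δ A : ℂ) := by
      funext A
      have : (z : ℂ) ≠ 0 := by exact_mod_cast hz0.ne'
      rw [mul_left_comm, ← mul_pow]
      push_cast
      rw [mul_inv_cancel₀ this]; simp
    rw [e] at h
    exact h
  refine h1.trans ?_
  set P := N p (fun x : (Fin n → Bool) × (Fin n → Bool) =>
        mul (fun A => (mD x.2 A : ℂ) * ((z⁻¹ : ℝ) : ℂ) ^ A.card) f x.1) with hP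
  set Q := ((2 : ℝ) ^ n) ^ (1 / p) * N p f with hQ
  have hQ0 : 0 ≤ Q := mul_nonneg (by positivity) (N_nonneg _)
  have h2 : P ≤ 1 / (z - 1) * (2 ^ 2 / (r / 2) * Q) := by
    have hz1 : 0 < z - 1 := by linarith
    rw [one_div, ← div_eq_inv_mul, le_div_iff₀ hz1]
    have := mul_le_mul_of_nonneg_left hpair hz0.le
    have e3 : z * ((1 - z⁻¹) * P) = P * (z - 1) := by field_simp
    have e4 : z * (z⁻¹ * (2 ^ 2 / (r / 2) * Q)) = 2 ^ 2 / (r / 2) * Q := by field_simp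
    rw [e3, e4] at this
    exact this
  have h3 : P ≤ 2 * (d : ℝ) ^ (alphaOf r) * (2 ^ 2 / (r / 2) * Q) :=
    h2.trans (mul_le_mul_of_nonneg_right hz2 (by positivity))
  calc (9 * 2 ^ 2) * P ≤ (9 * 2 ^ 2) * (2 * (d : ℝ) ^ (alphaOf r) * (2 ^ 2 / (r / 2) * Q)) := by
        linarith
    _ = _ := by field_simp; ring

/-- **Bernstein–Markov inequality for the vector-valued gradient** on `K`-convex spaces. -/
theorem stmt8 {X : Type*} [NormedAddCommGroup X] [NormedSpace ℂ X] [CompleteSpace X]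
    (hX : KConvex X) (p : ℝ) (hp : 1 < p) :
    ∃ α : ℝ, 1 ≤ α ∧ α < 2 ∧ ∃ C : ℝ, 0 < C ∧
      ∀ n d : ℕ, 1 ≤ d → d ≤ n → ∀ f : (Fin n → Bool) → X, degLE f d →
        ((2 ^ n : ℝ)⁻¹ * ∑ δ : Fin n → Bool,
            (lpNorm p (fun ε => ∑ i : Fin n, sgn (δ i) • pderiv i f ε)) ^ p) ^ (1 / p) ≤
          C * (d : ℝ) ^ α * (Real.log d + 1) * lpNorm p f := by
  obtain ⟨q, hq, r, hr, hr1, hdisc⟩ := hX.exists_disc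
  obtain ⟨r', hr', hr1', hst⟩ := stein_interp (X := X) hp hq hr hr1
  refine ⟨alphaOf r', one_le_alphaOf r', alphaOf_lt hr', 576 / r', by positivity, ?_⟩
  intro n d hd _ f hf
  have hmain := final_bound hp.le hr' hr1' hd (hst n (hdisc n)) f hf
  have hp0 : p ≠ 0 := by linarith
  have hc : (0 : ℝ) ≤ ((2 ^ n : ℝ)⁻¹) := by positivity
  have e1 : ((2 ^ n : ℝ)⁻¹ * ∑ δ : Fin n → Bool,
      (lpNorm p (fun ε => ∑ i : Fin n, sgn (δ i) • pderiv i f ε)) ^ p) ^ (1 / p)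
      = ((2 ^ n : ℝ)⁻¹) ^ (1 / p) * (((2 ^ n : ℝ)⁻¹) ^ (1 / p) *
        N p (fun x : (Fin n → Bool) × (Fin n → Bool) => mul (fun A => (mD x.2 A : ℂ)) f x.1)) := by
    unfold N
    rw [← Real.mul_rpow hc (by positivity), ← Real.mul_rpow hc (by positivity),
      Fintype.sum_prod_type_right]
    congr 2
    rw [Finset.mul_sum]
    refine Finset.sum_congr rfl fun δ _ => ?_
    rw [sum_pderiv_eq, lpNorm, one_div, Real.rpow_inv_rpow (by positivity) hp0]
  have hN : 0 ≤ N p f := N_nonneg _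
  have e2 : ((2 ^ n : ℝ)⁻¹) ^ (1 / p) * ((2 : ℝ) ^ n) ^ (1 / p) = 1 := by
    rw [← Real.mul_rpow hc (by positivity), inv_mul_cancel₀ (by positivity), Real.one_rpow]
  rw [e1, lpNorm_eq]
  set c := ((2 ^ n : ℝ)⁻¹) ^ (1 / p) with hcdef
  have hc0 : 0 ≤ c := by positivity
  have hlog : 0 ≤ Real.log d := Real.log_natCast_nonneg d
  calc _ ≤ c * (c * ((576 / r' * (d : ℝ) ^ (alphaOf r')) *
        (((2 : ℝ) ^ n) ^ (1 / p) * N p f))) := by gcongr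
    _ = (576 / r' * (d : ℝ) ^ (alphaOf r')) * 1 * (c * N p f) := by
        linear_combination (c * (576 / r' * (d : ℝ) ^ (alphaOf r')) * N p f) * e2
    _ ≤ _ := by
        gcongr
        linarith

end HammingCube
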